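/- arXiv:math/0604047 — 2 statements merged into one kernel-verified Lean document; each statement's English description precedes it below -/
import Mathlib

section
/- Let X be a compact metric space, let α_1, …, α_d be pairwise commuting homeomorphisms of X, let B be a unital C*-algebra, and let τ be a faithful tracial state on B. Suppose φ : C(X, ℂ) → B is an injective unital *-homomorphism and u_1, …, u_d are unitaries in B such that φ(f ∘ α_j) = u_j* φ(f) u_j for every f ∈ C(X, ℂ) and every j = 1, …, d. Then there exists a strictly positive Borel probability measure μ on X that is invariant under the action of α_1, …, α_d; moreover μ can be chosen so that ∫_X f dμ = τ(φ(f)) for every real-valued f ∈ C(X, ℂ). (This is the necessary direction of the embedding theorem: a covariant embedding of (C(X), α) into an algebra with faithful trace forces a strictly positive invariant measure.) -/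
open MeasureTheory
open scoped ComplexOrder

/-!
The functional `τ ∘ φ` on `C(X, ℂ)` is positive, so by Riesz–Markov–Kakutani it is integration
against a regular finite Borel measure `μ`, of total mass `τ 1 = 1`. Since `τ` is a trace,
`τ (u* b u) = τ b` for `u` unitary, so `μ` and its image under each homeomorphism integrate
continuous functions alike, and regularity makes them equal. A null open set would carry a nonzero
continuous `f` with `τ (φ f* φ f) = ∫ |f|² dμ = 0`, against faithfulness of `τ` and injectivity
of `φ`.
-/

open scoped CompactlySupported

section PositiveFunctional

variable {A B : Type*} [Ring A] [StarRing A] [PartialOrder A] [StarOrderedRing A] [Algebra ℂ A]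
  [Ring B] [StarRing B] [Algebra ℂ B]

/-- The pullback `τ ∘ φ` of a positive functional `τ` along a `*`-homomorphism `φ`. Positivity of
`τ` is phrased on elements `star b * b` because `B` carries no order. -/
def pullbackPositive (τ : B →ₗ[ℂ] ℂ) (hτ : ∀ b, 0 ≤ τ (star b * b)) (φ : A →⋆ₐ[ℂ] B) :
    A →ₚ[ℂ] ℂ :=
  PositiveLinearMap.mk₀ (τ ∘ₗ φ.toAlgHom.toLinearMap) fun a ha ↦ by
    induction StarOrderedRing.nonneg_iff.mp ha using AddSubmonoid.closure_induction with
    | mem _ hx =>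
      obtain ⟨s, rfl⟩ := hx
      change 0 ≤ τ (φ (star s * s))
      simpa only [map_mul, map_star] using hτ (φ s)
    | zero => simp
    | add x y hx hy ihx ihy =>
      rw [map_add]
      exact add_nonneg (ihx (StarOrderedRing.nonneg_iff.mpr hx))
        (ihy (StarOrderedRing.nonneg_iff.mpr hy))

@[simp]
theorem pullbackPositive_apply (τ : B →ₗ[ℂ] ℂ) (hτ : ∀ b, 0 ≤ τ (star b * b))
    (φ : A →⋆ₐ[ℂ] B) (a : A) : pullbackPositive τ hτ φ a = τ (φ a) :=
  rfl

end PositiveFunctional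

theorem trace_star_mul_mul_of_mem_unitary {B R : Type*} [Monoid B] [StarMul B] {τ : B → R}
    (hτ : ∀ a b, τ (a * b) = τ (b * a)) {u : B} (hu : u ∈ unitary B) (b : B) :
    τ (star u * b * u) = τ b := by
  rw [hτ, ← mul_assoc, Unitary.mul_star_self_of_mem hu, one_mul]

section Riesz

variable {X : Type*} [TopologicalSpace X]

/-- The inclusion of real-valued into complex-valued continuous functions. -/
noncomputable def complexify : C(X, ℝ) →L[ℝ] C(X, ℂ) :=
  Complex.ofRealCLM.compLeftContinuous ℝ X

@[simp]
theorem complexify_apply (f : C(X, ℝ)) (x : X) : complexify f x = f x :=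
  rfl

theorem complexify_nonneg {f : C(X, ℝ)} (hf : 0 ≤ f) : 0 ≤ complexify f :=
  fun x ↦ Complex.zero_le_real.mpr (hf x)

theorem isSelfAdjoint_complexify (f : C(X, ℝ)) : IsSelfAdjoint (complexify f) :=
  ContinuousMap.ext fun x ↦ Complex.conj_ofReal (f x)

theorem complexify_re_add_I_smul_complexify_im (f : C(X, ℂ)) :
    complexify ⟨fun x ↦ (f x).re, by fun_prop⟩ +
      Complex.I • complexify ⟨fun x ↦ (f x).im, by fun_prop⟩ = f := by
  ext x
  simp [mul_comm Complex.I, Complex.re_add_im]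

/-- The restriction of a positive functional on `C(X, ℂ)` to real-valued functions, in the form
taken by `RealRMK.rieszMeasure`. Its domain `C_c(X, ℝ)` is all of `C(X, ℝ)` when `X` is compact. -/
noncomputable def realRestriction (ψ : C(X, ℂ) →ₚ[ℂ] ℂ) : C_c(X, ℝ) →ₚ[ℝ] ℝ :=
  PositiveLinearMap.mk₀
    { toFun f := (ψ (complexify f.toContinuousMap)).re
      map_add' f g := by
        rw [← Complex.add_re, ← map_add, ← map_add]
        rfl
      map_smul' c f := by
        rw [RingHom.id_apply, ← Complex.smul_re, ← ψ.map_smul_of_tower, ← map_smul]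
        rfl }
    fun _ hf ↦ (Complex.nonneg_iff.mp (ψ.map_nonneg (complexify_nonneg hf))).1

variable [CompactSpace X]

theorem ofReal_re_apply_complexify (ψ : C(X, ℂ) →ₚ[ℂ] ℂ) (f : C(X, ℝ)) :
    ((ψ (complexify f)).re : ℂ) = ψ (complexify f) :=
  Complex.conj_eq_iff_re.mp ((isSelfAdjoint_complexify f).map' ψ)

variable [T2Space X] [MeasurableSpace X] [BorelSpace X]

theorem exists_regular_measure_integral_eq (ψ : C(X, ℂ) →ₚ[ℂ] ℂ) :
    ∃ μ : Measure X, μ.Regular ∧ ∀ f : C(X, ℂ), ∫ x, f x ∂μ = ψ f := by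
  let μ := RealRMK.rieszMeasure (realRestriction ψ)
  have integral_eq_of_real (f : C(X, ℝ)) : ((∫ x, f x ∂μ : ℝ) : ℂ) = ψ (complexify f) := by
    rw [← ofReal_re_apply_complexify]
    exact congrArg _ (RealRMK.integral_rieszMeasure (realRestriction ψ)
      (CompactlySupportedContinuousMap.continuousMapEquiv f))
  have μ_regular : μ.Regular := RealRMK.regular_rieszMeasure _
  refine ⟨μ, μ_regular, fun f ↦ ?_⟩
  have f_integrable : Integrable f μ :=
    f.continuous.integrable_of_hasCompactSupport (.of_compactSpace f)
  let re_f : C(X, ℝ) := ⟨fun x ↦ (f x).re, by fun_prop⟩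
  let im_f : C(X, ℝ) := ⟨fun x ↦ (f x).im, by fun_prop⟩
  calc ∫ x, f x ∂μ
      = ((∫ x, re_f x ∂μ : ℝ) : ℂ) + (∫ x, im_f x ∂μ : ℝ) * Complex.I :=
        (integral_re_add_im f_integrable).symm
    _ = ψ (complexify re_f + Complex.I • complexify im_f) := by
        rw [integral_eq_of_real, integral_eq_of_real, map_add, map_smul, smul_eq_mul, mul_comm]
    _ = ψ f := by rw [complexify_re_add_I_smul_complexify_im]

end Riesz

section Measure

theorem isOpenPosMeasure_of_integral_star_mul_self {X : Type*} [TopologicalSpace X]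
    [CompletelyRegularSpace X] [MeasurableSpace X] {μ : Measure X}
    (hμ : ∀ f : C(X, ℂ), ∫ x, (star f * f) x ∂μ = 0 → f = 0) : μ.IsOpenPosMeasure := by
  refine ⟨fun U U_open ⟨x, hxU⟩ U_null ↦ ?_⟩
  obtain ⟨g, g_cont, g_x, g_off⟩ :=
    CompletelyRegularSpace.completely_regular x Uᶜ U_open.isClosed_compl (by simpa using hxU)
  let f : C(X, ℂ) := ⟨fun y ↦ ((1 - g y : ℝ) : ℂ), by fun_prop⟩
  have f_off {y : X} (hy : y ∉ U) : f y = 0 := by simp [f, g_off hy]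
  have f_null : ∫ y, (star f * f) y ∂μ = 0 := by
    apply integral_eq_zero_of_ae
    filter_upwards [measure_eq_zero_iff_ae_notMem.mp U_null] with y hy
    simp [f_off hy]
  have f_x : f x = 1 := by simp [f, g_x]
  simp [hμ f f_null] at f_x

theorem measurePreserving_of_integral_comp_eq {X Y : Type*}
    [TopologicalSpace X] [MeasurableSpace X] [BorelSpace X]
    [TopologicalSpace Y] [T2Space Y] [LocallyCompactSpace Y] [MeasurableSpace Y] [BorelSpace Y]
    {μ : Measure X} {ν : Measure Y} [μ.Regular] [ν.Regular] (e : X ≃ₜ Y)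
    (he : ∀ f : C_c(Y, ℝ), ∫ x, f (e x) ∂μ = ∫ y, f y ∂ν) : MeasurePreserving e μ ν := by
  have map_regular : (μ.map e).Regular := .map e
  refine ⟨e.measurable, Measure.ext_of_integral_eq_on_compactlySupported fun f ↦ ?_⟩
  rw [e.measurableEmbedding.integral_map, he]

end Measure

theorem stmt_0_general {X : Type*} [TopologicalSpace X] [CompactSpace X] [T2Space X]
    [MeasurableSpace X] [BorelSpace X] {B : Type*} [Ring B] [StarRing B] [Algebra ℂ B]
    {ι : Type*} (α : ι → X ≃ₜ X) (τ : B →ₗ[ℂ] ℂ) (hτ1 : τ 1 = 1)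
    (hτpos : ∀ a : B, 0 ≤ τ (star a * a)) (hτtr : ∀ a b : B, τ (a * b) = τ (b * a))
    (hτfaithful : ∀ a : B, τ (star a * a) = 0 → a = 0)
    (φ : C(X, ℂ) →⋆ₐ[ℂ] B) (hφ : Function.Injective φ)
    (u : ι → B) (hu : ∀ j, u j ∈ unitary B)
    (hcov : ∀ j (f : C(X, ℂ)), φ (f.comp (α j : C(X, X))) = star (u j) * φ f * u j) :
    ∃ μ : Measure X, IsProbabilityMeasure μ ∧ μ.Regular ∧ μ.IsOpenPosMeasure ∧
      (∀ j, MeasurePreserving (α j) μ μ) ∧ ∀ f : C(X, ℂ), ∫ x, f x ∂μ = τ (φ f) := by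
  obtain ⟨μ, μ_regular, integral_eq⟩ :=
    exists_regular_measure_integral_eq (pullbackPositive τ hτpos φ)
  simp only [pullbackPositive_apply] at integral_eq
  refine ⟨μ, ?_, μ_regular, ?_, fun j ↦ ?_, integral_eq⟩
  · have mass : (μ.real Set.univ : ℂ) = 1 := by simpa [hτ1] using integral_eq 1
    exact ⟨(ENNReal.toReal_eq_one_iff _).mp (mod_cast mass)⟩
  · refine isOpenPosMeasure_of_integral_star_mul_self fun f hf ↦ ?_
    rw [integral_eq, map_mul, map_star] at hf
    exact (map_eq_zero_iff φ hφ).mp (hτfaithful _ hf)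
  · refine measurePreserving_of_integral_comp_eq (α j) fun f ↦ ?_
    have integral_comp (g : C(X, ℂ)) : ∫ x, g (α j x) ∂μ = ∫ x, g x ∂μ := by
      rw [integral_eq, ← trace_star_mul_mul_of_mem_unitary hτtr (hu j), ← hcov, ← integral_eq]
      rfl
    simpa [integral_complex_ofReal] using integral_comp (complexify f.toContinuousMap)

/-- A covariant embedding of `(C(X), α₁, …, α_d)` into a unital C*-algebra `B` carrying a
faithful tracial state `τ` forces the existence of a strictly positive Borel probability
measure on `X` invariant under each `α_j`; moreover the measure can be chosen so that
`∫ f dμ = τ(φ f)` for every real-valued continuous `f`. -/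
theorem stmt_0 {X : Type*} [MetricSpace X] [CompactSpace X] [MeasurableSpace X] [BorelSpace X]
    {B : Type*} [NormedRing B] [StarRing B] [CStarRing B] [NormedAlgebra ℂ B]
    [StarModule ℂ B] [CompleteSpace B]
    (d : ℕ) (α : Fin d → X ≃ₜ X)
    (hcomm : ∀ i j : Fin d, ∀ x : X, α i (α j x) = α j (α i x))
    (τ : B →ₗ[ℂ] ℂ)
    (hτ1 : τ 1 = 1)
    (hτpos : ∀ a : B, 0 ≤ τ (star a * a))
    (hτtr : ∀ a b : B, τ (a * b) = τ (b * a))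
    (hτfaithful : ∀ a : B, τ (star a * a) = 0 → a = 0)
    (φ : C(X, ℂ) →⋆ₐ[ℂ] B) (hφ : Function.Injective φ)
    (u : Fin d → B) (hu : ∀ j : Fin d, u j ∈ unitary B)
    (hcov : ∀ (j : Fin d) (f : C(X, ℂ)),
      φ (f.comp (α j : C(X, X))) = star (u j) * φ f * u j) :
    ∃ μ : Measure X, IsProbabilityMeasure μ ∧
      (∀ U : Set X, IsOpen U → U.Nonempty → 0 < μ U) ∧
      (∀ (j : Fin d) (E : Set X), MeasurableSet E → μ ((α j) '' E) = μ E) ∧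
      (∀ f : C(X, ℂ), (∀ x : X, (f x).im = 0) → ∫ x, f x ∂μ = τ (φ f)) := by
  obtain ⟨μ, μ_prob, -, μ_open_pos, μ_invariant, integral_eq⟩ :=
    stmt_0_general α τ hτ1 hτpos hτtr hτfaithful φ hφ u hu hcov
  refine ⟨μ, μ_prob, fun U hU hne ↦ hU.measure_pos μ hne, fun j E _ ↦ ?_, fun f _ ↦ integral_eq f⟩
  rw [← (μ_invariant j).measure_preimage_emb (α j).measurableEmbedding,
    Set.preimage_image_eq E (α j).injective]
end

section
/- Let A be a unital separable C*-algebra. If there exists an injective *-homomorphism from A into a unital simple AF-algebra, then there exists an injective *-homomorphism from A into a unital simple AF-algebra that has exactly one tracial state. -/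
open scoped ComplexOrder

/-- A bundled unital C*-algebra. -/
structure UnitalCStarAlg where
  carrier : Type
  [normedRing : NormedRing carrier]
  [starRing : StarRing carrier]
  [cstarRing : CStarRing carrier]
  [normedAlgebra : NormedAlgebra ℂ carrier]
  [starModule : StarModule ℂ carrier]
  [completeSpace : CompleteSpace carrier]

attribute [instance] UnitalCStarAlg.normedRing UnitalCStarAlg.starRing
  UnitalCStarAlg.cstarRing UnitalCStarAlg.normedAlgebra UnitalCStarAlg.starModule
  UnitalCStarAlg.completeSpace

/-- A unital C*-algebra is AF if it has an increasing sequence of finite-dimensional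
*-subalgebras (each containing the unit) with dense union. -/
def UnitalCStarAlg.IsAF (B : UnitalCStarAlg) : Prop :=
  ∃ S : ℕ → StarSubalgebra ℂ B.carrier,
    Monotone S ∧ (∀ n, FiniteDimensional ℂ (S n)) ∧ Dense (⋃ n, (S n : Set B.carrier))

/-- A unital C*-algebra is simple if its only closed two-sided ideals are `{0}` and the
whole algebra. -/
def UnitalCStarAlg.IsSimple (B : UnitalCStarAlg) : Prop :=
  ∀ I : TwoSidedIdeal B.carrier, IsClosed (I : Set B.carrier) → I = ⊥ ∨ I = ⊤

/-- A tracial state on a unital C*-algebra: a linear functional `τ` with `τ 1 = 1`,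
`τ (a* a) ≥ 0` and `τ (a b) = τ (b a)`. -/
def UnitalCStarAlg.IsTracialState (B : UnitalCStarAlg) (τ : B.carrier →ₗ[ℂ] ℂ) : Prop :=
  τ 1 = 1 ∧ (∀ a : B.carrier, 0 ≤ τ (star a * a)) ∧
    ∀ a b : B.carrier, τ (a * b) = τ (b * a)

/-!
A simple AF-algebra `B ≠ 0` has a tracial state, which is faithful by simplicity, so `B` is a limit
of multi-matrix algebras `A n` with faithful tracial states along trace-preserving inclusions. Two
multi-matrix algebras with faithful tracial states embed, preserving the traces, in a common one
whose minimal projections have rationally independent traces; independence forces two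
trace-preserving `*`-homomorphisms into the latter to have equal multiplicities, hence to be
unitarily equivalent. Amalgamating in this way produces trace-preserving embeddings
`φ n : A n → C n` and `ψ n : C n → C (n + 1)` that intertwine the two sequences.

The common algebra comes from writing all weights as positive integer combinations of rationally
independent numbers, and the coefficients can be chosen nearly proportional to the weights: every
block of `C (n + 1)` then contains the blocks of `C n` with multiplicities nearly proportional to
their traces. In particular all multiplicities are positive, so the limit of the `C n` is simple,
and every tracial state of the limit must restrict to the given trace of each `C n`. The `φ n` embed
`B` in this limit.
-/

open scoped Matrix.Norms.L2Operator

namespace UnitalCStarAlg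

scoped instance (B : UnitalCStarAlg) : CStarAlgebra B.carrier := {}

end UnitalCStarAlg

/-! ### Minimal projections -/

section CommutativeAlgebra

open WeakDual

variable {D : Type*} [CommCStarAlgebra D]

theorem ext_gelfandStarTransform {x y : D}
    (h : ⇑(gelfandStarTransform D x) = gelfandStarTransform D y) : x = y :=
  (gelfandStarTransform D).injective (DFunLike.coe_injective h)

variable [FiniteDimensional ℂ D]

instance finite_characterSpace : Finite (characterSpace ℂ D) :=
  Finite.of_equiv _ CharacterSpace.equivAlgHom.symm

open Classical in
/-- The idempotent of a finite-dimensional commutative C*-algebra whose Gelfand transform is the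
indicator function of the character `χ`. -/
noncomputable def characterIdempotent (χ : characterSpace ℂ D) : D :=
  (gelfandStarTransform D).symm ⟨Pi.single χ 1, continuous_of_discreteTopology⟩

open Classical in
theorem gelfandStarTransform_characterIdempotent (χ : characterSpace ℂ D) :
    ⇑(gelfandStarTransform D (characterIdempotent χ)) = Pi.single χ 1 := by
  rw [characterIdempotent, StarAlgEquiv.apply_symm_apply, ContinuousMap.coe_mk]

theorem isSelfAdjoint_characterIdempotent (χ : characterSpace ℂ D) :
    IsSelfAdjoint (characterIdempotent χ) :=
  ext_gelfandStarTransform <| by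
    classical
    rw [map_star, ContinuousMap.coe_star, gelfandStarTransform_characterIdempotent,
      ← Pi.single_star, star_one]

theorem characterIdempotent_ne_zero (χ : characterSpace ℂ D) : characterIdempotent χ ≠ 0 := by
  classical
  intro h
  have := congrFun (gelfandStarTransform_characterIdempotent χ) χ
  rw [h, map_zero, ContinuousMap.zero_apply, Pi.single_eq_same] at this
  exact zero_ne_one this

theorem characterIdempotent_mul (χ : characterSpace ℂ D) (x : D) :
    characterIdempotent χ * x = gelfandStarTransform D x χ • characterIdempotent χ :=
  ext_gelfandStarTransform <| by
    classical
    rw [map_mul, ContinuousMap.coe_mul, map_smul, ContinuousMap.coe_smul,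
      gelfandStarTransform_characterIdempotent, ← Pi.single_mul_left, ← Pi.single_smul, one_mul,
      smul_eq_mul, mul_one]

theorem completeOrthogonalIdempotents_characterIdempotent [Fintype (characterSpace ℂ D)] :
    CompleteOrthogonalIdempotents (characterIdempotent (D := D)) := by
  classical
  refine CompleteOrthogonalIdempotents.iff_ortho_complete.2 ⟨fun χ χ' h => ?_, ?_⟩
  · dsimp only
    rw [characterIdempotent_mul, gelfandStarTransform_characterIdempotent,
      Pi.single_eq_of_ne h, zero_smul]
  · refine ext_gelfandStarTransform ?_
    simp only [map_sum, ContinuousMap.coe_sum, gelfandStarTransform_characterIdempotent,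
      map_one, ContinuousMap.coe_one]
    exact Finset.univ_sum_single 1

end CommutativeAlgebra

/-- A minimal projection `p` of a complex `*`-algebra: a nonzero projection whose corner
`p F p` is one-dimensional. -/
structure IsMinimalProjection {F : Type*} [Ring F] [Algebra ℂ F] [Star F] (p : F) : Prop where
  isStarProjection : IsStarProjection p
  ne_zero : p ≠ 0
  exists_compress_eq_smul (x : F) : ∃ c : ℂ, p * x * p = c • p

section MaximalCommutative

variable {F : Type*} [CStarAlgebra F]

theorem isMulCommutative_adjoin_insert {D : StarSubalgebra ℂ F} [IsMulCommutative D] {y : F}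
    (hy : IsSelfAdjoint y) (hDy : ∀ x ∈ D, x * y = y * x) :
    IsMulCommutative (StarAlgebra.adjoin ℂ (insert y (D : Set F))) := by
  have hD (x z : F) (hx : x ∈ D) (hz : z ∈ D) : x * z = z * x :=
    congrArg Subtype.val (mul_comm' (⟨x, hx⟩ : D) ⟨z, hz⟩)
  have hcomm : ∀ a ∈ insert y (D : Set F), ∀ b ∈ insert y (D : Set F), a * b = b * a := by
    rintro a (rfl | ha) b (rfl | hb)
    · rfl
    · exact (hDy b hb).symm
    · exact hDy a ha
    · exact hD a b ha hb
  refine StarAlgebra.isMulCommutative_adjoin ℂ hcomm fun a ha b hb => hcomm a ha _ ?_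
  rcases hb with rfl | hb
  · exact Or.inl hy
  · exact Or.inr (star_mem hb)

theorem exists_maximal_isMulCommutative (F : Type*) [CStarAlgebra F] [FiniteDimensional ℂ F] :
    ∃ D : StarSubalgebra ℂ F, IsMulCommutative D ∧
      ∀ y, IsSelfAdjoint y → (∀ x ∈ D, x * y = y * x) → y ∈ D := by
  have hbot : IsMulCommutative (⊥ : StarSubalgebra ℂ F) := by
    refine .of_setLike_mul_comm fun x hx y _ => ?_
    obtain ⟨c, rfl⟩ := StarSubalgebra.mem_bot.1 hx
    exact Algebra.commutes c y
  obtain ⟨D, hD, hmax⟩ := exists_maximalFor_of_wellFoundedGT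
    (fun D : StarSubalgebra ℂ F => IsMulCommutative D)
    (fun D => Subalgebra.toSubmodule D.toSubalgebra) ⟨⊥, hbot⟩
  refine ⟨D, hD, fun y hy hDy => ?_⟩
  exact hmax (isMulCommutative_adjoin_insert hy hDy)
    (fun x hx => StarAlgebra.subset_adjoin ℂ _ (Set.mem_insert_of_mem y hx))
    (StarAlgebra.subset_adjoin ℂ _ (Set.mem_insert y _))

theorem exists_smul_of_forall_isSelfAdjoint {p : F}
    (h : ∀ x, IsSelfAdjoint x → ∃ c : ℂ, p * x * p = c • p) (x : F) :
    ∃ c : ℂ, p * x * p = c • p := by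
  obtain ⟨a, ha⟩ := h (realPart x) (realPart x).2
  obtain ⟨b, hb⟩ := h (imaginaryPart x) (imaginaryPart x).2
  refine ⟨a + Complex.I * b, ?_⟩
  conv_lhs => rw [← realPart_add_I_smul_imaginaryPart x]
  rw [mul_add, add_mul, ha, mul_smul_comm, smul_mul_assoc, hb, add_smul, mul_smul]

/- The self-adjoint elements of the corner of `p` commute with `D`, hence belong to it. -/
theorem isMinimalProjection_of_maximal_commutative {D : StarSubalgebra ℂ F}
    (hmax : ∀ y, IsSelfAdjoint y → (∀ x ∈ D, x * y = y * x) → y ∈ D)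
    {p : F} (hp : IsStarProjection p) (hp0 : p ≠ 0)
    (hleft : ∀ x ∈ D, ∃ c : ℂ, p * x = c • p) (hcomm : ∀ x ∈ D, x * p = p * x) :
    IsMinimalProjection p := by
  refine ⟨hp, hp0, exists_smul_of_forall_isSelfAdjoint fun x hx => ?_⟩
  have hmem : p * x * p ∈ D := by
    refine hmax _ (by simpa only [hp.isSelfAdjoint.star_eq] using hx.conjugate p) fun z hz => ?_
    obtain ⟨c, hc⟩ := hleft z hz
    rw [← mul_assoc, ← mul_assoc, hcomm z hz, mul_assoc (p * x), ← hcomm z hz, hcomm z hz, hc,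
      smul_mul_assoc, smul_mul_assoc, mul_smul_comm]
  obtain ⟨c, hc⟩ := hleft _ hmem
  refine ⟨c, ?_⟩
  rwa [← mul_assoc, ← mul_assoc, hp.isIdempotentElem.eq] at hc

theorem exists_completeOrthogonalIdempotents_isMinimalProjection
    (F : Type*) [CStarAlgebra F] [FiniteDimensional ℂ F] :
    ∃ (n : ℕ) (p : Fin n → F),
      CompleteOrthogonalIdempotents p ∧ ∀ i, IsMinimalProjection (p i) := by
  obtain ⟨D, hD, hmax⟩ := exists_maximal_isMulCommutative F
  have : FiniteDimensional ℂ D :=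
    inferInstanceAs (FiniteDimensional ℂ (Subalgebra.toSubmodule D.toSubalgebra))
  have : CompleteSpace D := FiniteDimensional.complete ℂ D
  let _ : CommCStarAlgebra D := { mul_comm := mul_comm' }
  let _ := Fintype.ofFinite (WeakDual.characterSpace ℂ D)
  let e := Fintype.equivFin (WeakDual.characterSpace ℂ D)
  have hp : CompleteOrthogonalIdempotents (characterIdempotent (D := D)) :=
    completeOrthogonalIdempotents_characterIdempotent
  refine ⟨_, fun i => (characterIdempotent (e.symm i) : D),
    (CompleteOrthogonalIdempotents.equiv e.symm).2 (hp.map (D.subtype : D →+* F)), fun i => ?_⟩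
  refine isMinimalProjection_of_maximal_commutative hmax
    ⟨congrArg Subtype.val (hp.idem (e.symm i)),
      congrArg Subtype.val (isSelfAdjoint_characterIdempotent (e.symm i))⟩
    (fun h => characterIdempotent_ne_zero (e.symm i) (Subtype.ext h)) (fun x hx => ?_)
    fun x hx => congrArg Subtype.val (mul_comm (⟨x, hx⟩ : D) (characterIdempotent (e.symm i)))
  exact ⟨_, congrArg Subtype.val (characterIdempotent_mul (e.symm i) (⟨x, hx⟩ : D))⟩

end MaximalCommutative

/-! ### Partial isometries and the structure of finite-dimensional C*-algebras -/

/-- `v` is a partial isometry with initial projection `p` and final projection `q`, that is, it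
implements the Murray–von Neumann equivalence of `p` and `q`. -/
structure IsPartialIsometryBetween {F : Type*} [Mul F] [Star F] (v p q : F) : Prop where
  star_mul_self : star v * v = p
  mul_star_self : v * star v = q

namespace IsPartialIsometryBetween

variable {F : Type*} [CStarAlgebra F] {p q r v w : F}

theorem symm (h : IsPartialIsometryBetween v p q) : IsPartialIsometryBetween (star v) q p :=
  ⟨by rw [star_star, h.mul_star_self], by rw [star_star, h.star_mul_self]⟩

theorem mul_initial (h : IsPartialIsometryBetween v p q) (hp : IsStarProjection p) :
    v * p = v := by
  have hzero : star (v * p - v) * (v * p - v) = 0 := by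
    rw [star_sub, star_mul, hp.isSelfAdjoint.star_eq, sub_mul, mul_sub, mul_sub,
      mul_assoc, mul_assoc, ← mul_assoc (star v), h.star_mul_self, hp.isIdempotentElem.eq,
      hp.isIdempotentElem.eq, sub_self]
  exact sub_eq_zero.1 ((CStarRing.star_mul_self_eq_zero_iff _).1 hzero)

theorem final_mul (h : IsPartialIsometryBetween v p q) (hq : IsStarProjection q) :
    q * v = v := by
  have := congrArg star (h.symm.mul_initial hq)
  rwa [star_mul, star_star, hq.isSelfAdjoint.star_eq] at this

theorem trans (hv : IsPartialIsometryBetween v p q) (hw : IsPartialIsometryBetween w q r)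
    (hq : IsStarProjection q) :
    IsPartialIsometryBetween (w * v) p r where
  star_mul_self := by
    rw [star_mul, mul_assoc, ← mul_assoc (star w), hw.star_mul_self, hv.final_mul hq,
      hv.star_mul_self]
  mul_star_self := by
    rw [star_mul, mul_assoc, ← mul_assoc v, hv.mul_star_self, ← mul_assoc, hw.mul_initial hq,
      hw.mul_star_self]

end IsPartialIsometryBetween

namespace IsMinimalProjection

variable {F : Type*} [CStarAlgebra F] {p q : F}

theorem smul_inj (hp : IsMinimalProjection p) {a b : ℂ} : a • p = b • p ↔ a = b :=
  smul_left_inj hp.ne_zero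

/-- The pure state attached to a minimal projection `p`, characterised by
`p * x * p = hp.state x • p`. -/
noncomputable def state (hp : IsMinimalProjection p) : F →ₗ[ℂ] ℂ where
  toFun x := (hp.exists_compress_eq_smul x).choose
  map_add' x y := by
    rw [← hp.smul_inj, ← (hp.exists_compress_eq_smul (x + y)).choose_spec, add_smul,
      ← (hp.exists_compress_eq_smul x).choose_spec, ← (hp.exists_compress_eq_smul y).choose_spec,
      mul_add, add_mul]
  map_smul' c x := by
    rw [← hp.smul_inj, ← (hp.exists_compress_eq_smul (c • x)).choose_spec, RingHom.id_apply,
      smul_assoc, ← (hp.exists_compress_eq_smul x).choose_spec, mul_smul_comm, smul_mul_assoc]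

theorem compress_eq (hp : IsMinimalProjection p) (x : F) : p * x * p = hp.state x • p :=
  (hp.exists_compress_eq_smul x).choose_spec

theorem state_eq_iff (hp : IsMinimalProjection p) {x : F} {c : ℂ} :
    hp.state x = c ↔ p * x * p = c • p := by
  rw [hp.compress_eq, hp.smul_inj]

theorem state_star (hp : IsMinimalProjection p) (x : F) :
    hp.state (star x) = star (hp.state x) := by
  have h := congrArg star (hp.compress_eq x)
  rw [star_smul, star_mul, star_mul, hp.isStarProjection.isSelfAdjoint.star_eq, ← mul_assoc] at h
  rwa [hp.state_eq_iff]

theorem exists_pos_star_mul_self_eq_smul (hp : IsMinimalProjection p) {z : F} (hz : z ≠ 0)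
    (hzp : z * p = z) : ∃ r : ℝ, 0 < r ∧ star z * z = (r : ℂ) • p := by
  let _ := CStarAlgebra.spectralOrder F
  have := CStarAlgebra.spectralOrderedRing F
  have hreal : ((hp.state (star z * z)).re : ℂ) = hp.state (star z * z) := by
    rw [← Complex.conj_eq_iff_re, starRingEnd_apply, ← hp.state_star, star_mul, star_star]
  have hpz : p * star z = star z := by
    rw [← hp.isStarProjection.isSelfAdjoint.star_eq, ← star_mul, hzp]
  have heq : star z * z = ((hp.state (star z * z)).re : ℂ) • p := by
    rw [hreal, ← hp.compress_eq, ← mul_assoc, mul_assoc, hzp, hpz]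
  refine ⟨_, lt_of_le_of_ne ?_ fun h => ?_, heq⟩
  · rw [← smul_nonneg_iff_nonneg_of_pos_right
      (hp.isStarProjection.nonneg.lt_of_ne hp.ne_zero.symm), ← Complex.coe_smul, ← heq]
    exact star_mul_self_nonneg z
  · rw [← h, Complex.ofReal_zero, zero_smul, CStarRing.star_mul_self_eq_zero_iff] at heq
    exact hz heq

theorem exists_isPartialIsometryBetween (hp : IsMinimalProjection p) (hq : IsMinimalProjection q)
    {x : F} (hx : q * x * p ≠ 0) : ∃ v, IsPartialIsometryBetween v p q := by
  have hpp := hp.isStarProjection.isIdempotentElem.eq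
  have hqq := hq.isStarProjection.isIdempotentElem.eq
  set z := q * x * p with hz
  have hzp : z * p = z := by rw [hz, mul_assoc, hpp]
  have hqz : q * z = z := by rw [hz, ← mul_assoc, ← mul_assoc, hqq]
  have hzq : star z * q = star z := by
    rw [← hq.isStarProjection.isSelfAdjoint.star_eq, ← star_mul, hqz]
  obtain ⟨r, hr, hpr⟩ := hp.exists_pos_star_mul_self_eq_smul hx hzp
  obtain ⟨r', -, hqr⟩ := hq.exists_pos_star_mul_self_eq_smul (star_ne_zero.2 hx) hzq
  rw [star_star] at hqr
  -- both scalars are read off from `z * star z * z`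
  have hrr : (r' : ℂ) = r := by
    have h : z * star z * z = (r : ℂ) • z := by rw [mul_assoc, hpr, mul_smul_comm, hzp]
    rw [hqr, smul_mul_assoc, hqz] at h
    exact smul_left_injective ℂ hx h
  have hs : star ((√r : ℂ)⁻¹) * (√r : ℂ)⁻¹ * r = 1 := by
    rw [star_inv₀, Complex.star_def, Complex.conj_ofReal, ← mul_inv, ← Complex.ofReal_mul,
      Real.mul_self_sqrt hr.le, inv_mul_cancel₀ (by exact_mod_cast hr.ne')]
  refine ⟨(√r : ℂ)⁻¹ • z, ?_, ?_⟩
  · rw [star_smul, smul_mul_smul_comm, hpr, smul_smul, hs, one_smul]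
  · rw [star_smul, smul_mul_smul_comm, hqr, hrr, smul_smul, mul_comm _ (star _), hs, one_smul]

end IsMinimalProjection

/-- The `*`-algebra `⨁ M_{κ l}(ℂ)` of block-diagonal matrices with blocks of sizes `κ l`. -/
abbrev MultiMatrix {ι : Type*} (κ : ι → ℕ) : Type _ :=
  ∀ l, Matrix (Fin (κ l)) (Fin (κ l)) ℂ

namespace MultiMatrix

variable {ι : Type*} [DecidableEq ι] {κ : ι → ℕ}

/-- The `(a, b)` matrix unit of the block `l`. -/
def matrixUnit (l : ι) (a b : Fin (κ l)) : MultiMatrix κ :=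
  Pi.single l (Matrix.single a b 1)

theorem matrixUnit_mul_matrixUnit (l : ι) (a b c : Fin (κ l)) :
    matrixUnit l a b * matrixUnit l b c = matrixUnit l a c := by
  rw [matrixUnit, matrixUnit, ← Pi.single_mul, Matrix.single_mul_single_same, one_mul]
  rfl

theorem matrixUnit_mul_mul_matrixUnit (l : ι) (a b c d : Fin (κ l)) (x : MultiMatrix κ) :
    matrixUnit l a b * x * matrixUnit l c d = x l b c • matrixUnit l a d := by
  rw [matrixUnit, matrixUnit, matrixUnit, ← Pi.single_mul_left, ← Pi.single_mul,
    Matrix.single_mul_mul_single, ← Pi.single_smul, Matrix.smul_single]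
  simp

theorem star_matrixUnit (l : ι) (a b : Fin (κ l)) :
    star (matrixUnit l a b) = matrixUnit l b a := by
  rw [matrixUnit, ← Pi.single_star, Matrix.star_eq_conjTranspose, Matrix.conjTranspose_single,
    star_one]
  rfl

theorem eq_sum_matrixUnit [Fintype ι] (x : MultiMatrix κ) :
    x = ∑ l, ∑ a, ∑ b, x l a b • matrixUnit l a b := by
  conv_lhs => rw [← Finset.univ_sum_single x]
  refine Finset.sum_congr rfl fun l _ => ?_
  conv_lhs => rw [Matrix.matrix_eq_sum_single (x l)]
  simp only [matrixUnit, ← LinearMap.coe_single (R := ℂ), map_sum, ← map_smul,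
    Matrix.smul_single, smul_eq_mul, mul_one]

theorem sum_matrixUnit_diag [Fintype ι] : ∑ l, ∑ a, matrixUnit (κ := κ) l a a = 1 := by
  conv_rhs => rw [eq_sum_matrixUnit (1 : MultiMatrix κ)]
  simp [Matrix.one_apply]

end MultiMatrix

/-- Abstract matrix units of type `κ` in a `*`-algebra `F`: a minimal projection `corner l` for
each block `l`, and partial isometries `leg l a` with initial projection `corner l` whose final
projections form a partition of unity. The matrix units are `leg l a * star (leg l b)`. -/
structure MatrixFrame {ι : Type*} [Fintype ι] (κ : ι → ℕ) (F : Type*) [CStarAlgebra F] where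
  corner : ι → F
  leg (l : ι) : Fin (κ l) → F
  isMinimalProjection_corner (l : ι) : IsMinimalProjection (corner l)
  leg_mul_corner (l : ι) (a : Fin (κ l)) : leg l a * corner l = leg l a
  star_leg_mul_leg (l : ι) (a b : Fin (κ l)) :
    star (leg l a) * leg l b = if a = b then corner l else 0
  star_leg_mul_mul_leg_of_ne {l m : ι} (h : l ≠ m) (a : Fin (κ l)) (x : F) (b : Fin (κ m)) :
    star (leg l a) * x * leg m b = 0
  sum_leg_mul_star_leg : ∑ l, ∑ a, leg l a * star (leg l a) = 1

namespace MatrixFrame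

variable {ι : Type*} [Fintype ι] {κ : ι → ℕ} {F : Type*} [CStarAlgebra F]
  (S : MatrixFrame κ F)

theorem corner_mul_star_leg (l : ι) (a : Fin (κ l)) :
    S.corner l * star (S.leg l a) = star (S.leg l a) := by
  have h := congrArg star (S.leg_mul_corner l a)
  rwa [star_mul, (S.isMinimalProjection_corner l).isStarProjection.isSelfAdjoint.star_eq] at h

/-- The `(a, b)` entry in block `l` of `x`, computed with the matrix units of the frame. -/
noncomputable def entry (l : ι) (a b : Fin (κ l)) (x : F) : ℂ :=
  (S.isMinimalProjection_corner l).state (star (S.leg l a) * x * S.leg l b)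

theorem star_leg_mul_mul_leg (l : ι) (a b : Fin (κ l)) (x : F) :
    star (S.leg l a) * x * S.leg l b = S.entry l a b x • S.corner l := by
  rw [entry, ← (S.isMinimalProjection_corner l).compress_eq, ← mul_assoc, ← mul_assoc,
    S.corner_mul_star_leg, mul_assoc _ _ (S.corner l), S.leg_mul_corner]

theorem entry_eq_iff {l : ι} {a b : Fin (κ l)} {x : F} {c : ℂ} :
    S.entry l a b x = c ↔ star (S.leg l a) * x * S.leg l b = c • S.corner l := by
  rw [S.star_leg_mul_mul_leg, (S.isMinimalProjection_corner l).smul_inj]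

theorem entry_one (l : ι) (a b : Fin (κ l)) : S.entry l a b 1 = (1 : Matrix _ _ ℂ) a b := by
  rw [S.entry_eq_iff, mul_one, S.star_leg_mul_leg, Matrix.one_apply, ite_smul, one_smul, zero_smul]

theorem entry_add (l : ι) (a b : Fin (κ l)) (x y : F) :
    S.entry l a b (x + y) = S.entry l a b x + S.entry l a b y := by
  rw [entry, mul_add, add_mul, map_add]
  rfl

theorem entry_smul (l : ι) (a b : Fin (κ l)) (c : ℂ) (x : F) :
    S.entry l a b (c • x) = c * S.entry l a b x := by
  rw [entry, mul_smul_comm, smul_mul_assoc, map_smul]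
  rfl

theorem entry_star (l : ι) (a b : Fin (κ l)) (x : F) :
    S.entry l a b (star x) = star (S.entry l b a x) := by
  rw [entry, entry, ← IsMinimalProjection.state_star, star_mul, star_mul, star_star, mul_assoc]

theorem entry_mul (l : ι) (a b : Fin (κ l)) (x y : F) :
    S.entry l a b (x * y) = ∑ d, S.entry l a d x * S.entry l d b y := by
  have hblock (m : ι) (d : Fin (κ m)) :
      star (S.leg l a) * x * (S.leg m d * star (S.leg m d)) * y * S.leg l b =
        (star (S.leg l a) * x * S.leg m d) * (star (S.leg m d) * y * S.leg l b) := by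
    simp only [mul_assoc]
  rw [S.entry_eq_iff, Finset.sum_smul]
  calc star (S.leg l a) * (x * y) * S.leg l b
      = ∑ m, ∑ d, (star (S.leg l a) * x * S.leg m d) * (star (S.leg m d) * y * S.leg l b) := by
        simp_rw [← hblock, ← Finset.sum_mul, ← Finset.mul_sum, S.sum_leg_mul_star_leg]
        rw [mul_one, mul_assoc _ x]
    _ = ∑ d, (star (S.leg l a) * x * S.leg l d) * (star (S.leg l d) * y * S.leg l b) := by
        refine Fintype.sum_eq_single l fun m hm => Finset.sum_eq_zero fun d _ => ?_
        rw [S.star_leg_mul_mul_leg_of_ne hm.symm, zero_mul]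
    _ = ∑ d, (S.entry l a d x * S.entry l d b y) • S.corner l := by
        refine Finset.sum_congr rfl fun d _ => ?_
        rw [S.star_leg_mul_mul_leg, S.star_leg_mul_mul_leg, smul_mul_smul_comm,
          (S.isMinimalProjection_corner l).isStarProjection.isIdempotentElem.eq]

/-- The `*`-homomorphism sending `x` to the matrices of its entries. -/
noncomputable def toMultiMatrix : F →⋆ₐ[ℂ] MultiMatrix κ where
  toFun x l := Matrix.of fun a b => S.entry l a b x
  map_one' := by ext l a b; exact S.entry_one l a b
  map_mul' x y := by ext l a b; simp [Matrix.mul_apply, S.entry_mul]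
  map_zero' := by ext l a b; simpa using S.entry_smul l a b 0 0
  map_add' x y := by ext l a b; exact S.entry_add l a b x y
  commutes' c := by
    ext l a b
    simp [Algebra.algebraMap_eq_smul_one, S.entry_smul, S.entry_one]
  map_star' x := by ext l a b; exact S.entry_star l a b x

theorem toMultiMatrix_apply (x : F) (l : ι) (a b : Fin (κ l)) :
    S.toMultiMatrix x l a b = S.entry l a b x :=
  rfl

theorem toMultiMatrix_injective : Function.Injective S.toMultiMatrix := by
  rw [injective_iff_map_eq_zero]
  intro x hx
  have hentry (l : ι) (a b : Fin (κ l)) : S.entry l a b x = 0 :=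
    congrFun (congrFun (congrFun hx l) a) b
  have hx_eq : x = (∑ l, ∑ a, S.leg l a * star (S.leg l a)) * x *
      (∑ l, ∑ a, S.leg l a * star (S.leg l a)) := by
    rw [S.sum_leg_mul_star_leg, one_mul, mul_one]
  rw [hx_eq]
  simp only [Finset.sum_mul, Finset.mul_sum]
  refine Finset.sum_eq_zero fun l _ => Finset.sum_eq_zero fun a _ =>
    Finset.sum_eq_zero fun m _ => Finset.sum_eq_zero fun b _ => ?_
  have hcorner : star (S.leg m b) * x * S.leg l a = 0 := by
    rcases eq_or_ne m l with rfl | h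
    · rw [S.star_leg_mul_mul_leg, hentry, zero_smul]
    · exact S.star_leg_mul_mul_leg_of_ne h b x a
  calc S.leg m b * star (S.leg m b) * x * (S.leg l a * star (S.leg l a))
      = S.leg m b * (star (S.leg m b) * x * S.leg l a) * star (S.leg l a) := by
        simp only [mul_assoc]
    _ = 0 := by rw [hcorner, mul_zero, zero_mul]

theorem toMultiMatrix_leg_mul_star_leg [DecidableEq ι] (l : ι) (a b : Fin (κ l)) :
    S.toMultiMatrix (S.leg l a * star (S.leg l b)) = MultiMatrix.matrixUnit l a b := by
  ext m c d
  rw [S.toMultiMatrix_apply, S.entry_eq_iff, ← mul_assoc, MultiMatrix.matrixUnit]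
  rcases eq_or_ne m l with rfl | h
  · rw [S.star_leg_mul_leg, mul_assoc, S.star_leg_mul_leg, Pi.single_eq_same, Matrix.single_apply]
    simp only [mul_ite, ite_mul, zero_mul, mul_zero,
      (S.isMinimalProjection_corner m).isStarProjection.isIdempotentElem.eq]
    split_ifs <;> simp_all
  · have := S.star_leg_mul_mul_leg_of_ne h c 1 a
    rw [mul_one] at this
    rw [this, Pi.single_eq_of_ne h, Matrix.zero_apply, zero_mul, zero_mul, zero_smul]

theorem toMultiMatrix_surjective : Function.Surjective S.toMultiMatrix := by
  classical
  intro M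
  refine ⟨∑ l, ∑ a, ∑ b, M l a b • (S.leg l a * star (S.leg l b)), ?_⟩
  simp only [map_sum, map_smul, S.toMultiMatrix_leg_mul_star_leg]
  exact (MultiMatrix.eq_sum_matrixUnit M).symm

end MatrixFrame

section Wedderburn

variable {F : Type*} [CStarAlgebra F] {I : Type*} [Fintype I]

/-- The matrix units assembled from a partition of unity into minimal projections `p i`, grouped
into classes by `cl`, and partial isometries `w i` from a representative `P (cl i)` to `p i`. -/
noncomputable def MatrixFrame.ofPartition {ι : Type*} [Fintype ι] [DecidableEq ι] {p w : I → F}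
    {P : ι → F} {cl : I → ι} (hp : CompleteOrthogonalIdempotents p)
    (hproj : ∀ i, IsStarProjection (p i)) (hP : ∀ l, IsMinimalProjection (P l))
    (hw : ∀ i, IsPartialIsometryBetween (w i) (P (cl i)) (p i))
    (hcl : ∀ i j, cl i ≠ cl j → ∀ x, p i * x * p j = 0) :
    MatrixFrame (fun l => Fintype.card {i // cl i = l}) F :=
  have hstar (i : I) : star (w i) = star (w i) * p i :=
    ((hw i).symm.mul_initial (hproj i)).symm
  have hsmul (i : I) : w i = p i * w i := ((hw i).final_mul (hproj i)).symm
  let e (l : ι) : {i // cl i = l} ≃ Fin (Fintype.card {i // cl i = l}) := Fintype.equivFin _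
  { corner := P
    leg l a := w ((e l).symm a)
    isMinimalProjection_corner := hP
    leg_mul_corner l a := by
      have h := (hw ((e l).symm a)).mul_initial (hP _).isStarProjection
      rwa [((e l).symm a).2] at h
    star_leg_mul_leg l a b := by
      split_ifs with h
      · rw [h, (hw ((e l).symm b)).star_mul_self, ((e l).symm b).2]
      · have hab : ((e l).symm a : I) ≠ (e l).symm b := fun hab =>
          h ((e l).symm.injective (Subtype.ext hab))
        rw [hstar, hsmul ((e l).symm b), mul_assoc, ← mul_assoc (p _), hp.ortho hab, zero_mul,
          mul_zero]
    star_leg_mul_mul_leg_of_ne {l m} hlm a x b := by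
      have hab : cl ((e l).symm a) ≠ cl ((e m).symm b) := by
        rwa [((e l).symm a).2, ((e m).symm b).2]
      rw [hstar, hsmul ((e m).symm b), mul_assoc _ _ x, mul_assoc _ _ (p _ * _),
        ← mul_assoc _ _ (w _), hcl _ _ hab, zero_mul, mul_zero]
    sum_leg_mul_star_leg := by
      have hfiber (l : ι) : ∑ a, w ((e l).symm a) * star (w ((e l).symm a)) =
          ∑ i : {i // cl i = l}, p i := by
        rw [← Equiv.sum_comp (e l).symm]
        exact Finset.sum_congr rfl fun a _ => (hw _).mul_star_self
      simp only [hfiber]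
      rw [Fintype.sum_fiberwise cl p, hp.complete] }

/-- Murray–von Neumann equivalence on a family of projections. -/
def partialIsometrySetoid {p : I → F} (hp : ∀ i, IsStarProjection (p i)) : Setoid I where
  r i j := ∃ v, IsPartialIsometryBetween v (p i) (p j)
  iseqv :=
    { refl i := ⟨p i, by rw [(hp i).isSelfAdjoint.star_eq, (hp i).isIdempotentElem.eq],
        by rw [(hp i).isSelfAdjoint.star_eq, (hp i).isIdempotentElem.eq]⟩
      symm := fun ⟨v, hv⟩ => ⟨star v, hv.symm⟩
      trans := fun ⟨v, hv⟩ ⟨w, hw⟩ => ⟨w * v, hv.trans hw (hp _)⟩ }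

theorem exists_matrixFrame (F : Type*) [CStarAlgebra F] [FiniteDimensional ℂ F] :
    ∃ (k : ℕ) (κ : Fin k → ℕ), (∀ l, NeZero (κ l)) ∧ Nonempty (MatrixFrame κ F) := by
  classical
  obtain ⟨n, p, hcomplete, hp⟩ := exists_completeOrthogonalIdempotents_isMinimalProjection F
  let s := partialIsometrySetoid fun i => (hp i).isStarProjection
  let e := Fintype.equivFin (Quotient s)
  let cl (i : Fin n) := e ⟦i⟧
  let rep (l : Fin (Fintype.card (Quotient s))) := (e.symm l).out
  have hrep (i : Fin n) : ∃ v, IsPartialIsometryBetween v (p (rep (cl i))) (p i) := by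
    have h : s (rep (cl i)) i := by
      simpa only [rep, cl, Equiv.symm_apply_apply] using Quotient.mk_out (s := s) i
    exact h
  choose w hw using hrep
  have hne (i j : Fin n) (hij : cl i ≠ cl j) (x : F) : p i * x * p j = 0 := by
    by_contra hx
    have h : s j i := (hp j).exists_isPartialIsometryBetween (hp i) hx
    exact hij (congrArg e (Quotient.sound (s.symm h)))
  refine ⟨_, _, fun l => ⟨(Fintype.card_pos_iff.2 ⟨rep l, ?_⟩).ne'⟩, ⟨MatrixFrame.ofPartition
    hcomplete (fun i => (hp i).isStarProjection) (fun l => hp (rep l)) hw hne⟩⟩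
  simp only [cl, rep, Quotient.out_eq, Equiv.apply_symm_apply]

theorem exists_starAlgEquiv_multiMatrix (F : Type*) [CStarAlgebra F] [FiniteDimensional ℂ F] :
    ∃ (k : ℕ) (κ : Fin k → ℕ), (∀ l, NeZero (κ l)) ∧ Nonempty (F ≃⋆ₐ[ℂ] MultiMatrix κ) := by
  obtain ⟨k, κ, hκ, ⟨S⟩⟩ := exists_matrixFrame F
  exact ⟨k, κ, hκ, ⟨StarAlgEquiv.ofBijective S.toMultiMatrix
    ⟨S.toMultiMatrix_injective, S.toMultiMatrix_surjective⟩⟩⟩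

end Wedderburn

/-! ### Unitary equivalence of representations -/

theorem exists_perm_mem_iff {n : Type*} [Finite n] {s t : Finset n} (h : s.card = t.card) :
    ∃ σ : Equiv.Perm n, ∀ i, σ i ∈ t ↔ i ∈ s := by
  classical
  let e : {i // i ∈ s} ≃ {i // i ∈ t} := Finset.equivOfCardEq h
  refine ⟨e.extendSubtype, fun i => ⟨fun hi => ?_, e.extendSubtype_mem i⟩⟩
  by_contra his
  exact e.extendSubtype_not_mem i his hi

section Projections

variable {n : Type*} [Fintype n] {p q : Matrix n n ℂ}

section DecidableEq

variable [DecidableEq n]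

theorem exists_conj_diagonal_indicator_eq (hp : IsStarProjection p) :
    ∃ (U : Matrix.unitaryGroup n ℂ) (s : Finset n),
      p = (U : Matrix n n ℂ) * Matrix.diagonal (fun i => if i ∈ s then 1 else 0) *
        star (U : Matrix n n ℂ) := by
  have hherm : p.IsHermitian := hp.isSelfAdjoint
  refine ⟨hherm.eigenvectorUnitary, Finset.univ.filter (hherm.eigenvalues · = 1), ?_⟩
  conv_lhs => rw [hherm.spectral_theorem, Unitary.conjStarAlgAut_apply]
  congr 3
  ext i
  rcases hp.isIdempotentElem.spectrum_subset ℝ (hherm.eigenvalues_mem_spectrum_real i) with h | h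
  · simp [h]
  · simp [Set.mem_singleton_iff.1 h]

theorem trace_conj_diagonal_indicator (U : Matrix.unitaryGroup n ℂ) (s : Finset n) :
    ((U : Matrix n n ℂ) * Matrix.diagonal (fun i => if i ∈ s then 1 else 0) *
      star (U : Matrix n n ℂ)).trace = (s.card : ℂ) := by
  rw [Matrix.trace_mul_cycle, Unitary.coe_star_mul_self, one_mul, Matrix.trace_diagonal]
  simp

theorem exists_conj_eq_of_trace_eq (hp : IsStarProjection p) (hq : IsStarProjection q)
    (h : p.trace = q.trace) :
    ∃ W : Matrix.unitaryGroup n ℂ, W * p * star (W : Matrix n n ℂ) = q := by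
  obtain ⟨U, s, rfl⟩ := exists_conj_diagonal_indicator_eq hp
  obtain ⟨V, t, rfl⟩ := exists_conj_diagonal_indicator_eq hq
  rw [trace_conj_diagonal_indicator, trace_conj_diagonal_indicator, Nat.cast_inj] at h
  obtain ⟨σ, hσ⟩ := exists_perm_mem_iff h
  let V' : Matrix n n ℂ := (V : Matrix n n ℂ).submatrix id σ
  have hV' : V' * star V' = 1 := by
    rw [Matrix.star_eq_conjTranspose, Matrix.conjTranspose_submatrix, Matrix.submatrix_mul_equiv,
      ← Matrix.star_eq_conjTranspose, Unitary.mul_star_self_of_mem V.2, Matrix.submatrix_id_id]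
  have hdiag : V' * Matrix.diagonal (fun i => if i ∈ s then 1 else 0) * star V' =
      (V : Matrix n n ℂ) * Matrix.diagonal (fun i => if i ∈ t then 1 else 0) *
        star (V : Matrix n n ℂ) := by
    have hst : Matrix.diagonal (fun i => if i ∈ s then (1 : ℂ) else 0) =
        (Matrix.diagonal (fun i => if i ∈ t then (1 : ℂ) else 0)).submatrix σ σ := by
      simp_rw [Matrix.submatrix_diagonal_equiv, Function.comp_def, hσ]
    rw [hst, Matrix.star_eq_conjTranspose, Matrix.conjTranspose_submatrix,
      Matrix.submatrix_mul_equiv, Matrix.submatrix_mul_equiv, Matrix.submatrix_id_id,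
      Matrix.star_eq_conjTranspose]
  refine ⟨⟨V', Matrix.mem_unitaryGroup_iff.2 hV'⟩ * star U, ?_⟩
  rw [← hdiag]
  simp only [Submonoid.coe_mul, Unitary.coe_star, star_mul, star_star, mul_assoc]
  rw [← mul_assoc (star (U : Matrix n n ℂ)), Unitary.coe_star_mul_self, one_mul,
    ← mul_assoc (star (U : Matrix n n ℂ)), Unitary.coe_star_mul_self, one_mul]

end DecidableEq

theorem exists_isPartialIsometryBetween_of_trace_eq (hp : IsStarProjection p)
    (hq : IsStarProjection q) (h : p.trace = q.trace) :
    ∃ w, IsPartialIsometryBetween w p q := by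
  classical
  obtain ⟨W, rfl⟩ := exists_conj_eq_of_trace_eq hp hq h
  refine ⟨W * p, ?_, ?_⟩
  · rw [star_mul, mul_assoc, ← mul_assoc (star (W : Matrix n n ℂ)), Unitary.coe_star_mul_self,
      one_mul, hp.isSelfAdjoint.star_eq, hp.isIdempotentElem.eq]
  · rw [star_mul, ← mul_assoc, mul_assoc _ p, hp.isSelfAdjoint.star_eq, hp.isIdempotentElem.eq]

end Projections

namespace MultiMatrix

variable {ι : Type*} [DecidableEq ι] {κ : ι → ℕ}

theorem matrixUnit_mul_matrixUnit_of_ne (l : ι) (a d : Fin (κ l)) {b c : Fin (κ l)}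
    (h : b ≠ c) : matrixUnit l a b * matrixUnit l c d = 0 := by
  rw [matrixUnit, matrixUnit, ← Pi.single_mul, Matrix.single_mul_single_of_ne _ _ _ _ h,
    Pi.single_zero]

theorem matrixUnit_mul_matrixUnit_of_block_ne {l m : ι} (h : l ≠ m) (a b : Fin (κ l))
    (c d : Fin (κ m)) : matrixUnit l a b * matrixUnit m c d = 0 := by
  rw [matrixUnit, matrixUnit, ← Pi.single_mul_left, Pi.single_eq_of_ne h, mul_zero,
    Pi.single_zero]

theorem isStarProjection_matrixUnit (l : ι) (a : Fin (κ l)) :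
    IsStarProjection (matrixUnit l a a) :=
  ⟨matrixUnit_mul_matrixUnit l a a a, star_matrixUnit l a a⟩

section Intertwiner

variable [Fintype ι] [∀ l, NeZero (κ l)] {F : Type*} [CStarAlgebra F]

/-- The element `∑ π' (e_{a0}) w_l π (e_{0a})`, which intertwines `π` and `π'` when each `w l` is a
partial isometry from `π (e_{00})` to `π' (e_{00})`. -/
noncomputable def intertwiner (π π' : MultiMatrix κ →⋆ₐ[ℂ] F) (w : ι → F) : F :=
  ∑ l, ∑ a, π' (matrixUnit l a 0) * w l * π (matrixUnit l 0 a)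

variable {π π' : MultiMatrix κ →⋆ₐ[ℂ] F} {w : ι → F}

theorem star_intertwiner : star (intertwiner π π' w) = intertwiner π' π (star w) := by
  simp only [intertwiner, star_sum, star_mul, ← map_star, star_matrixUnit, mul_assoc,
    Pi.star_apply]

variable (hw : ∀ l, IsPartialIsometryBetween (w l) (π (matrixUnit l 0 0)) (π' (matrixUnit l 0 0)))
include hw

theorem map_matrixUnit_mul_intertwiner (l : ι) (a : Fin (κ l)) :
    π' (matrixUnit l 0 a) * intertwiner π π' w = w l * π (matrixUnit l 0 a) := by
  rw [intertwiner, Finset.mul_sum, Fintype.sum_eq_single l, Finset.mul_sum,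
    Fintype.sum_eq_single a]
  · rw [← mul_assoc, ← mul_assoc, ← map_mul, matrixUnit_mul_matrixUnit,
      (hw l).final_mul ((isStarProjection_matrixUnit l 0).map π')]
  · intro b hb
    rw [← mul_assoc, ← mul_assoc, ← map_mul, matrixUnit_mul_matrixUnit_of_ne l 0 0 hb.symm,
      map_zero, zero_mul, zero_mul]
  · intro m hm
    rw [Finset.mul_sum]
    refine Finset.sum_eq_zero fun b _ => ?_
    rw [← mul_assoc, ← mul_assoc, ← map_mul, matrixUnit_mul_matrixUnit_of_block_ne hm.symm,
      map_zero, zero_mul, zero_mul]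

theorem intertwiner_mul_map_matrixUnit (l : ι) (a : Fin (κ l)) :
    intertwiner π π' w * π (matrixUnit l a 0) = π' (matrixUnit l a 0) * w l := by
  have h := map_matrixUnit_mul_intertwiner (w := star w) (fun l => (hw l).symm) l a
  rw [← star_intertwiner] at h
  simpa only [star_mul, star_star, ← map_star, star_matrixUnit, Pi.star_apply]
    using congrArg star h

theorem star_intertwiner_mul_self : star (intertwiner π π' w) * intertwiner π π' w = 1 := by
  have hterm (l : ι) (a : Fin (κ l)) :
      π (matrixUnit l a 0) * star (w l) * π' (matrixUnit l 0 a) * intertwiner π π' w =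
        π (matrixUnit l a a) := by
    rw [mul_assoc, map_matrixUnit_mul_intertwiner hw, mul_assoc, ← mul_assoc (star _),
      (hw l).star_mul_self, ← map_mul, ← map_mul, matrixUnit_mul_matrixUnit,
      matrixUnit_mul_matrixUnit]
  rw [star_intertwiner, intertwiner, Finset.sum_mul]
  simp only [Finset.sum_mul, Pi.star_apply, hterm]
  rw [← map_one π, ← sum_matrixUnit_diag]
  simp only [map_sum]

theorem intertwiner_mul_map (x : MultiMatrix κ) :
    intertwiner π π' w * π x = π' x * intertwiner π π' w := by
  have hunit (l : ι) (a b : Fin (κ l)) : intertwiner π π' w * π (matrixUnit l a b) =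
      π' (matrixUnit l a b) * intertwiner π π' w := by
    rw [← matrixUnit_mul_matrixUnit l a 0 b, map_mul, map_mul, ← mul_assoc,
      intertwiner_mul_map_matrixUnit hw, mul_assoc, mul_assoc,
      map_matrixUnit_mul_intertwiner hw]
  rw [eq_sum_matrixUnit x]
  simp only [map_sum, map_smul, Finset.mul_sum, Finset.sum_mul, mul_smul_comm, smul_mul_assoc,
    hunit]

end Intertwiner

theorem exists_conjStarAlgAut_comp_eq_of_isPartialIsometryBetween [Finite ι]
    [∀ l, NeZero (κ l)] {F : Type*} [CStarAlgebra F] {π π' : MultiMatrix κ →⋆ₐ[ℂ] F} {w : ι → F}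
    (hw : ∀ l, IsPartialIsometryBetween (w l) (π (matrixUnit l 0 0)) (π' (matrixUnit l 0 0))) :
    ∃ U : unitary F, ∀ x, Unitary.conjStarAlgAut ℂ F U (π x) = π' x := by
  have := Fintype.ofFinite ι
  have hright : intertwiner π π' w * star (intertwiner π π' w) = 1 := by
    have h := star_intertwiner_mul_self (w := star w) fun l => (hw l).symm
    rwa [← star_intertwiner, star_star] at h
  refine ⟨⟨_, star_intertwiner_mul_self hw, hright⟩, fun x => ?_⟩
  rw [Unitary.conjStarAlgAut_apply, intertwiner_mul_map hw, mul_assoc, hright, mul_one]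

end MultiMatrix

namespace MultiMatrix

variable {ι ι' : Type*} {κ : ι → ℕ} {κ' : ι' → ℕ}

theorem exists_conjStarAlgAut_comp_eq_of_trace_eq [Finite ι] [Finite ι'] [∀ l, NeZero (κ l)]
    {φ ψ : MultiMatrix κ →⋆ₐ[ℂ] MultiMatrix κ'}
    (h : ∀ x m, (φ x m).trace = (ψ x m).trace) :
    ∃ U : unitary (MultiMatrix κ'), ∀ x, Unitary.conjStarAlgAut ℂ _ U (φ x) = ψ x := by
  classical
  have := Fintype.ofFinite ι'
  have hblock {x : MultiMatrix κ'} (hx : IsStarProjection x) (m : ι') : IsStarProjection (x m) :=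
    ⟨congrFun hx.isIdempotentElem m, congrFun hx.isSelfAdjoint m⟩
  have hiso (l : ι) (m : ι') := exists_isPartialIsometryBetween_of_trace_eq
    (hblock ((isStarProjection_matrixUnit l 0).map φ) m)
    (hblock ((isStarProjection_matrixUnit l 0).map ψ) m) (h _ m)
  choose w hw using hiso
  exact exists_conjStarAlgAut_comp_eq_of_isPartialIsometryBetween (w := w) fun l =>
    ⟨funext fun m => (hw l m).star_mul_self, funext fun m => (hw l m).mul_star_self⟩

variable [Fintype ι]

/-- The `*`-homomorphism repeating the block `l` of `x` on the diagonal `N l` times. -/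
def amplification [DecidableEq ι] (κ : ι → ℕ) (N : ι → ℕ) :
    MultiMatrix κ →⋆ₐ[ℂ] Matrix (Σ j : (Σ l, Fin (N l)), Fin (κ j.1))
      (Σ j : (Σ l, Fin (N l)), Fin (κ j.1)) ℂ where
  toFun x := Matrix.blockDiagonal' fun j => x j.1
  map_one' := Matrix.blockDiagonal'_one
  map_mul' _ _ := Matrix.blockDiagonal'_mul _ _
  map_zero' := Matrix.blockDiagonal'_zero
  map_add' _ _ := Matrix.blockDiagonal'_add _ _
  commutes' c := by
    simp only [Algebra.algebraMap_eq_smul_one]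
    exact (Matrix.blockDiagonal'_smul c _).trans (congrArg _ Matrix.blockDiagonal'_one)
  map_star' _ := (Matrix.blockDiagonal'_conjTranspose _).symm

theorem trace_amplification [DecidableEq ι] (N : ι → ℕ) (x : MultiMatrix κ) :
    (amplification κ N x).trace = ∑ l, N l * (x l).trace := by
  refine (Matrix.trace_blockDiagonal' fun j : Σ l, Fin (N l) => x j.1).trans ?_
  rw [Fintype.sum_sigma]
  exact Finset.sum_congr rfl fun l _ =>
    (Fin.sum_const (N l) (x l).trace).trans (nsmul_eq_mul _ _)

/-- `N l m` is the multiplicity of the block `l` of the source in the block `m` of the target,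
as measured by traces. -/
def HasMultiplicities (ψ : MultiMatrix κ →⋆ₐ[ℂ] MultiMatrix κ') (N : ι → ι' → ℕ) : Prop :=
  ∀ x m, (ψ x m).trace = ∑ l, N l m * (x l).trace

theorem exists_hasMultiplicities (N : ι → ι' → ℕ) (hκ' : ∀ m, κ' m = ∑ l, N l m * κ l) :
    ∃ ψ : MultiMatrix κ →⋆ₐ[ℂ] MultiMatrix κ', HasMultiplicities ψ N := by
  classical
  have hcard (m : ι') :
      Fintype.card (Σ j : (Σ l, Fin (N l m)), Fin (κ j.1)) = Fintype.card (Fin (κ' m)) := by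
    simp only [Fintype.card_sigma, Fintype.card_fin, Fintype.sum_sigma, Finset.sum_const,
      Finset.card_univ, smul_eq_mul, hκ']
  let e (m : ι') := Fintype.equivOfCardEq (hcard m)
  let ψ : MultiMatrix κ →⋆ₐ[ℂ] MultiMatrix κ' :=
    { AlgHom.pi fun m => (Matrix.reindexAlgEquiv ℂ ℂ (e m)).toAlgHom.comp
        (amplification κ fun l => N l m).toAlgHom with
      map_star' x := funext fun m => congrArg (Matrix.reindex (e m) (e m))
        (map_star (amplification κ fun l => N l m) x) }
  refine ⟨ψ, fun x m => ?_⟩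
  rw [← trace_amplification fun l => N l m]
  exact Equiv.sum_comp (e m).symm fun i => amplification κ (fun l => N l m) x i i

end MultiMatrix

/-! ### Simultaneous rational approximation -/

theorem exists_pos_eq_sum_mul_add_ite {ι : Type*} [Fintype ι] [DecidableEq ι] {b q : ι → ℝ}
    {δ : ℝ} (hb : ∀ a, 0 < b a) (hq : ∀ a, q a ≤ b a) (hδ : 0 < δ)
    (hsum : ∑ a, b a < δ + ∑ a, q a) :
    ∃ c : ι → ℝ, (∀ m, 0 < c m) ∧ ∀ a, b a = ∑ m, c m * (q a + if m = a then δ else 0) := by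
  have hb_sum : 0 ≤ ∑ a, b a := Finset.sum_nonneg fun a _ => (hb a).le
  have hpos : 0 < δ + ∑ a, q a := hb_sum.trans_lt hsum
  -- summing the required identity over `a` determines `s = ∑ c m`, and then each `c a`
  let s : ℝ := (∑ a, b a) / (δ + ∑ a, q a)
  have hs : s * (δ + ∑ a, q a) = ∑ a, b a := div_mul_cancel₀ _ hpos.ne'
  have hs_nonneg : 0 ≤ s := by positivity
  have hs_lt : s < 1 := (div_lt_one hpos).2 hsum
  refine ⟨fun a => (b a - s * q a) / δ, fun a => div_pos ?_ hδ, fun a => ?_⟩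
  · nlinarith [hb a, hs_lt, mul_le_mul_of_nonneg_left (hq a) hs_nonneg]
  · have hc_sum : ∑ m, (b m - s * q m) / δ = s := by
      rw [← Finset.sum_div, Finset.sum_sub_distrib, ← Finset.mul_sum, ← hs]
      field_simp
      ring
    simp only [mul_add, mul_ite, mul_zero, Finset.sum_add_distrib, Finset.sum_ite_eq',
      Finset.mem_univ, if_true, ← Finset.sum_mul, hc_sum]
    field_simp
    ring

theorem exists_pos_eq_sum_mul_rat {ι : Type*} [Fintype ι] {b : ι → ℝ} (hb : ∀ a, 0 < b a)
    {η : ℝ} (hη : 0 < η) :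
    ∃ (c : ι → ℝ) (f : ι → ι → ℚ), (∀ m, 0 < c m) ∧ (∀ a, b a = ∑ m, c m * f m a) ∧
      ∀ m a, |(f m a : ℝ) - b a| ≤ η := by
  classical
  obtain ⟨δ, hδ, hδη⟩ : ∃ δ : ℚ, (0 : ℝ) < δ ∧ (δ : ℝ) < η := exists_rat_btwn hη
  let θ : ℝ := δ / (Fintype.card ι + 1)
  have hθ : 0 < θ := by positivity
  have hθδ : (Fintype.card ι + 1) * θ = δ := mul_div_cancel₀ _ (by positivity)
  have hθη : θ < η := by nlinarith [(Fintype.card ι).cast_nonneg (α := ℝ)]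
  choose q hbq hqb using fun a => exists_rat_btwn (sub_lt_self (b a) hθ)
  have hsum : ∑ a, b a < δ + ∑ a, (q a : ℝ) := by
    have h : ∑ a, (b a - θ) ≤ ∑ a, (q a : ℝ) := Finset.sum_le_sum fun a _ => (hbq a).le
    rw [Finset.sum_sub_distrib, Finset.sum_const, Finset.card_univ, nsmul_eq_mul] at h
    linarith
  obtain ⟨c, hc, hbc⟩ := exists_pos_eq_sum_mul_add_ite hb (fun a => (hqb a).le) hδ hsum
  refine ⟨c, fun m a => q a + if m = a then δ else 0, hc, fun a => ?_, fun m a => ?_⟩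
  · simpa only [Rat.cast_add, apply_ite (Rat.cast : ℚ → ℝ), Rat.cast_zero] using hbc a
  · have := hbq a
    have := hqb a
    rw [abs_le]
    dsimp only
    split_ifs <;> push_cast <;> constructor <;> linarith

theorem exists_natCast_eq_mul_rat {ι : Type*} [Finite ι] {q : ι → ℚ} (hq : ∀ i, 0 ≤ q i) :
    ∃ (D : ℕ) (N : ι → ℕ), 0 < D ∧ ∀ i, (N i : ℚ) = D * q i := by
  have := Fintype.ofFinite ι
  choose c hc using fun i => Finset.dvd_prod_of_mem (fun j => (q j).den) (Finset.mem_univ i)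
  refine ⟨∏ j, (q j).den, fun i => c i * (q i).num.toNat,
    Finset.prod_pos fun i _ => (q i).den_pos, fun i => ?_⟩
  have hnum : ((q i).num.toNat : ℚ) = (q i).num :=
    mod_cast Int.toNat_of_nonneg (Rat.num_nonneg.2 (hq i))
  rw [hc i, Nat.cast_mul, Nat.cast_mul, hnum, ← Rat.mul_den_eq_num (q i)]
  ring

theorem linearIndependent_of_mem_span_range {K V ι : Type*} [DivisionRing K] [AddCommGroup V]
    [Module K V] [Finite ι] {b r : ι → V} (hb : LinearIndependent K b)
    (h : ∀ a, b a ∈ Submodule.span K (Set.range r)) : LinearIndependent K r := by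
  have := Fintype.ofFinite ι
  have := FiniteDimensional.span_of_finite K (Set.finite_range r)
  rw [linearIndependent_iff_card_le_finrank_span, ← finrank_span_eq_card hb]
  exact Submodule.finrank_mono (Submodule.span_le.2 (Set.range_subset_iff.2 h))

theorem exists_pos_forall_mul_le {ι : Type*} [Finite ι] (S : ι → ℝ) {t : ι → ℝ}
    (ht : ∀ i, 0 < t i) : ∃ η > 0, ∀ i, S i * η ≤ t i := by
  have hsmall (i : ι) : ∀ᶠ η in nhdsWithin (0 : ℝ) (Set.Ioi 0), S i * η ≤ t i := by
    have h : Filter.Tendsto (fun η => S i * η) (nhds 0) (nhds 0) := by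
      simpa using (continuous_const_mul (S i)).tendsto 0
    exact ((h.mono_left nhdsWithin_le_nhds).eventually_lt_const (ht i)).mono fun _ => le_of_lt
  obtain ⟨η, hη, hpos⟩ := ((Filter.eventually_all.2 hsmall).and self_mem_nhdsWithin).exists
  exact ⟨η, hpos, hη⟩

theorem exists_fin_linearIndependent_coeff {K V ι : Type*} [DivisionRing K] [AddCommGroup V]
    [Module K V] [Finite ι] (t : ι → V) :
    ∃ (d : ℕ) (a : Fin d → ι) (A : ι → Fin d → K),
      LinearIndependent K (t ∘ a) ∧ ∀ i, ∑ j, A i j • t (a j) = t i := by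
  obtain ⟨κ, a, ha, hspan, hli⟩ := exists_linearIndependent' K t
  have := Finite.of_injective a ha
  let e := Finite.equivFin κ
  have hmem (i : ι) : t i ∈ Submodule.span K (Set.range (t ∘ a ∘ e.symm)) := by
    rw [← Function.comp_assoc, e.symm.surjective.range_comp, hspan]
    exact Submodule.subset_span (Set.mem_range_self i)
  choose A hA using fun i => Submodule.mem_span_range_iff_exists_fun K |>.1 (hmem i)
  exact ⟨_, a ∘ e.symm, A, hli.comp e.symm e.symm.injective, hA⟩

theorem abs_sum_mul_sub_sum_mul_le {ι : Type*} [Fintype ι] {A f b : ι → ℝ} {η : ℝ}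
    (h : ∀ a, |f a - b a| ≤ η) :
    |∑ a, A a * f a - ∑ a, A a * b a| ≤ (∑ a, |A a|) * η := by
  rw [← Finset.sum_sub_distrib, Finset.sum_mul]
  refine (Finset.abs_sum_le_sum_abs _ _).trans (Finset.sum_le_sum fun a _ => ?_)
  rw [← mul_sub, abs_mul]
  exact mul_le_mul_of_nonneg_left (h a) (abs_nonneg _)

theorem exists_linearIndependent_eq_sum_rat_mul {ι : Type*} [Finite ι] {t : ι → ℝ}
    (ht : ∀ i, 0 < t i) {ε : ℝ} (hε : 0 < ε) :
    ∃ (d : ℕ) (c : Fin d → ℝ) (F : ι → Fin d → ℚ), (∀ m, 0 < c m) ∧ LinearIndependent ℚ c ∧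
      (∀ i, t i = ∑ m, F i m * c m) ∧ ∀ i m, |(F i m : ℝ) - t i| ≤ ε * t i := by
  obtain ⟨d, a, A, hli, hA⟩ := exists_fin_linearIndependent_coeff (K := ℚ) t
  simp only [Rat.smul_def] at hA
  obtain ⟨η, hη, hAη⟩ :=
    exists_pos_forall_mul_le (fun i => ∑ j, |(A i j : ℝ)|) fun i => mul_pos hε (ht i)
  obtain ⟨c, f, hc, hbf, hfb⟩ := exists_pos_eq_sum_mul_rat (fun j => ht (a j)) hη
  refine ⟨d, c, fun i m => ∑ j, A i j * f m j, hc,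
    linearIndependent_of_mem_span_range hli fun j => ?_, fun i => ?_, fun i m => ?_⟩
  · refine (Submodule.mem_span_range_iff_exists_fun ℚ).2 ⟨fun m => f m j, ?_⟩
    simp only [Function.comp_apply, hbf, Rat.smul_def, mul_comm]
  · rw [← hA i]
    push_cast
    simp only [hbf, Finset.mul_sum, Finset.sum_mul]
    rw [Finset.sum_comm]
    exact Finset.sum_congr rfl fun m _ => Finset.sum_congr rfl fun j _ => by ring
  · refine le_trans ?_ (hAη i)
    push_cast
    conv_lhs => rw [← hA i]
    exact abs_sum_mul_sub_sum_mul_le (hfb m)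

theorem exists_linearIndependent_eq_sum_natCast_mul {ι : Type*} [Finite ι] {t : ι → ℝ}
    (ht : ∀ i, 0 < t i) {ε : ℝ} (hε : 0 < ε) (hε' : ε ≤ 1) :
    ∃ (d : ℕ) (r : Fin d → ℝ) (N : ι → Fin d → ℕ) (D : ℝ), (∀ m, 0 < r m) ∧
      LinearIndependent ℚ r ∧ (∀ i, t i = ∑ m, N i m * r m) ∧ 0 < D ∧
      ∀ i m, |N i m - D * t i| ≤ ε * (D * t i) := by
  obtain ⟨d, c, F, hc, hli, htF, hF⟩ := exists_linearIndependent_eq_sum_rat_mul ht hε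
  have hF_nonneg (p : ι × Fin d) : 0 ≤ F p.1 p.2 := by
    have h : (0 : ℝ) ≤ F p.1 p.2 := by
      nlinarith [(abs_le.1 (hF p.1 p.2)).1, mul_le_mul_of_nonneg_right hε' (ht p.1).le]
    exact_mod_cast h
  obtain ⟨D, N, hD, hN⟩ := exists_natCast_eq_mul_rat hF_nonneg
  have hN' (i : ι) (m : Fin d) : (N (i, m) : ℝ) = D * F i m := mod_cast hN (i, m)
  have hD_pos : (0 : ℝ) < D := mod_cast hD
  refine ⟨d, fun m => c m / D, fun i m => N (i, m), D, fun m => div_pos (hc m) hD_pos,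
    linearIndependent_of_mem_span_range hli fun m => ?_, fun i => ?_, hD_pos, fun i m => ?_⟩
  · have h : c m = (D : ℚ) • (c m / D) := by
      rw [Rat.smul_def, Rat.cast_natCast, mul_div_cancel₀ _ hD_pos.ne']
    rw [h]
    exact Submodule.smul_mem _ _ (Submodule.subset_span (Set.mem_range_self m))
  · simp only [hN', htF i]
    exact Finset.sum_congr rfl fun m _ => by field_simp
  · rw [hN', ← mul_sub, abs_mul, abs_of_pos hD_pos, mul_left_comm]
    exact mul_le_mul_of_nonneg_left (hF i m) hD_pos.le

/-! ### Weighted traces and amalgamation -/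

namespace MultiMatrix

theorem tracial_ext {ι : Type*} [Finite ι] [DecidableEq ι] {κ : ι → ℕ} [∀ l, NeZero (κ l)]
    {f g : MultiMatrix κ →ₗ[ℂ] ℂ}
    (hf : ∀ x y, f (x * y) = f (y * x)) (hg : ∀ x y, g (x * y) = g (y * x))
    (h : ∀ l, f (matrixUnit l 0 0) = g (matrixUnit l 0 0)) : f = g := by
  have := Fintype.ofFinite ι
  have hunit (l : ι) (a b : Fin (κ l)) : f (matrixUnit l a b) = g (matrixUnit l a b) := by
    rw [← matrixUnit_mul_matrixUnit l a 0 b, hf, hg]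
    rcases eq_or_ne a b with rfl | hab
    · rw [matrixUnit_mul_matrixUnit, h]
    · rw [matrixUnit_mul_matrixUnit_of_ne l 0 0 hab.symm, map_zero, map_zero]
  refine LinearMap.ext fun x => ?_
  rw [eq_sum_matrixUnit x]
  simp only [map_sum, map_smul, hunit]

variable {ι ι' : Type*} [Fintype ι] {κ' : ι' → ℕ} {κ : ι → ℕ}

/-- The tracial functional `x ↦ ∑ w l * tr (x l)`. -/
noncomputable def weightedTrace (w : ι → ℝ) : MultiMatrix κ →ₗ[ℂ] ℂ :=
  ∑ l, (w l : ℂ) • (Matrix.traceLinearMap (Fin (κ l)) ℂ ℂ ∘ₗ LinearMap.proj l)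

theorem weightedTrace_apply (w : ι → ℝ) (x : MultiMatrix κ) :
    weightedTrace w x = ∑ l, w l * (x l).trace := by
  simp [weightedTrace]

theorem weightedTrace_one (w : ι → ℝ) :
    weightedTrace w (1 : MultiMatrix κ) = ((∑ l, w l * κ l : ℝ) : ℂ) := by
  simp [weightedTrace_apply]

theorem weightedTrace_mul_comm (w : ι → ℝ) (x y : MultiMatrix κ) :
    weightedTrace w (x * y) = weightedTrace w (y * x) := by
  simp only [weightedTrace_apply, Pi.mul_apply, Matrix.trace_mul_comm (x _)]

theorem weightedTrace_conjStarAlgAut (w : ι → ℝ) (U : unitary (MultiMatrix κ))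
    (x : MultiMatrix κ) :
    weightedTrace w (Unitary.conjStarAlgAut ℂ _ U x) = weightedTrace w x := by
  rw [Unitary.conjStarAlgAut_apply, weightedTrace_mul_comm, ← mul_assoc,
    Unitary.star_mul_self_of_mem U.2, one_mul]

theorem weightedTrace_matrixUnit [DecidableEq ι] (w : ι → ℝ) (l : ι) (a : Fin (κ l)) :
    weightedTrace w (matrixUnit l a a) = w l := by
  rw [weightedTrace_apply, Fintype.sum_eq_single l, matrixUnit, Pi.single_eq_same,
    Matrix.trace_single_eq_same, mul_one]
  intro m hm
  rw [matrixUnit, Pi.single_eq_of_ne hm, Matrix.trace_zero, mul_zero]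

theorem weightedTrace_map [Fintype ι'] {ψ : MultiMatrix κ →⋆ₐ[ℂ] MultiMatrix κ'}
    {N : ι → ι' → ℕ} (hψ : HasMultiplicities ψ N) (w : ι' → ℝ) (x : MultiMatrix κ) :
    weightedTrace w (ψ x) = weightedTrace (fun l => ∑ m, N l m * w m) x := by
  simp only [weightedTrace_apply, hψ x, Complex.ofReal_sum, Finset.mul_sum, Finset.sum_mul]
  rw [Finset.sum_comm]
  refine Finset.sum_congr rfl fun l _ => Finset.sum_congr rfl fun m _ => ?_
  push_cast
  ring

end MultiMatrix

theorem natCast_coeff_injective {ι : Type*} [Fintype ι] {r : ι → ℝ} (hr : LinearIndependent ℚ r) :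
    Function.Injective fun a : ι → ℕ => ∑ m, a m * r m := by
  intro a b hab
  have h := hr.fintypeLinearCombination_injective
    (a₁ := fun m => (a m : ℚ)) (a₂ := fun m => (b m : ℚ))
    (by simpa [Fintype.linearCombination_apply, Rat.smul_def] using hab)
  exact funext fun m => by exact_mod_cast congrFun h m

theorem exists_trace_eq_natCast {n : Type*} [Fintype n] {p : Matrix n n ℂ}
    (hp : IsStarProjection p) : ∃ k : ℕ, p.trace = k := by
  classical
  obtain ⟨U, s, rfl⟩ := exists_conj_diagonal_indicator_eq hp
  exact ⟨_, trace_conj_diagonal_indicator U s⟩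

/-- A direct sum of full matrix algebras with a faithful tracial state: `weight l` is the trace of a
minimal projection of the block `l`. -/
structure TracialMultiMatrix where
  numBlocks : ℕ
  size : Fin numBlocks → ℕ
  weight : Fin numBlocks → ℝ
  [neZero_size : ∀ l, NeZero (size l)]
  weight_pos : ∀ l, 0 < weight l
  sum_weight_mul_size : ∑ l, weight l * size l = 1

namespace TracialMultiMatrix

attribute [instance] neZero_size

variable {A A' C C' : TracialMultiMatrix}

/-- The underlying algebra. -/
abbrev Carrier (C : TracialMultiMatrix) : Type := MultiMatrix C.size

/-- The tracial state carried by `C`. -/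
noncomputable def trace (C : TracialMultiMatrix) : C.Carrier →ₗ[ℂ] ℂ :=
  MultiMatrix.weightedTrace C.weight

instance (C : TracialMultiMatrix) : Nonempty (Fin C.numBlocks) := by
  by_contra h
  have := not_nonempty_iff.1 h
  simpa using C.sum_weight_mul_size

/-- The `*`-homomorphism `f` intertwines the given tracial states. -/
def IsTracePreserving (f : A.Carrier →⋆ₐ[ℂ] C.Carrier) : Prop :=
  ∀ x, C.trace (f x) = A.trace x

/-- Every block of the target contains the blocks of the source with multiplicities proportional,
up to a relative error `ε`, to the weights of the source. -/
def IsNearlyProportional (ψ : C.Carrier →⋆ₐ[ℂ] C'.Carrier) (ε : ℝ) : Prop :=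
  ∃ (N : Fin C.numBlocks → Fin C'.numBlocks → ℕ) (D : ℝ), MultiMatrix.HasMultiplicities ψ N ∧
    0 < D ∧ ∀ l m, |N l m - D * C.weight l| ≤ ε * (D * C.weight l)

theorem isTracePreserving_of_hasMultiplicities {ψ : A.Carrier →⋆ₐ[ℂ] C.Carrier}
    {N : Fin A.numBlocks → Fin C.numBlocks → ℕ} (hψ : MultiMatrix.HasMultiplicities ψ N)
    (hN : ∀ l, A.weight l = ∑ m, N l m * C.weight m) : IsTracePreserving ψ := by
  intro x
  rw [trace, trace, MultiMatrix.weightedTrace_map hψ]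
  simp only [← hN]

theorem sum_sum_mul_size_mul {d : ℕ} {r : Fin d → ℝ} {N : Fin A.numBlocks → Fin d → ℕ}
    (hN : ∀ l, A.weight l = ∑ m, N l m * r m) :
    ∑ m, ((∑ l, N l m * A.size l : ℕ) : ℝ) * r m = 1 := by
  rw [← A.sum_weight_mul_size]
  push_cast
  simp only [hN, Finset.sum_mul]
  rw [Finset.sum_comm]
  exact Finset.sum_congr rfl fun l _ => Finset.sum_congr rfl fun m _ => by ring

theorem exists_joint_embedding (A C : TracialMultiMatrix) {ε : ℝ} (hε : 0 < ε) (hε' : ε < 1) :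
    ∃ C' : TracialMultiMatrix, LinearIndependent ℚ C'.weight ∧
      ∃ (ν : A.Carrier →⋆ₐ[ℂ] C'.Carrier) (ψ : C.Carrier →⋆ₐ[ℂ] C'.Carrier),
        IsTracePreserving ν ∧ IsTracePreserving ψ ∧ IsNearlyProportional ψ ε := by
  obtain ⟨d, r, N, D, hr, hli, hN, hD, hND⟩ := exists_linearIndependent_eq_sum_natCast_mul
    (t := Sum.elim A.weight C.weight) (Sum.rec A.weight_pos C.weight_pos) hε hε'.le
  have hN_pos (l : Fin C.numBlocks) (m : Fin d) : 0 < N (Sum.inr l) m := by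
    have h : |N (Sum.inr l) m - D * C.weight l| ≤ ε * (D * C.weight l) := hND (Sum.inr l) m
    have h_lt := mul_lt_mul_of_pos_right hε' (mul_pos hD (C.weight_pos l))
    exact_mod_cast (by linarith [(abs_le.1 h).1] : (0 : ℝ) < N (Sum.inr l) m)
  let size (m : Fin d) : ℕ := ∑ l, N (Sum.inr l) m * C.size l
  have hsize : size = fun m => ∑ l, N (Sum.inl l) m * A.size l :=
    natCast_coeff_injective hli <|
      (sum_sum_mul_size_mul fun l => hN (Sum.inr l)).trans
        (sum_sum_mul_size_mul fun l => hN (Sum.inl l)).symm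
  have hsize_ne (m : Fin d) : NeZero (size m) :=
    ⟨(Finset.sum_pos (fun l _ => Nat.mul_pos (hN_pos l m) (NeZero.pos _))
      Finset.univ_nonempty).ne'⟩
  let C' : TracialMultiMatrix :=
    ⟨d, size, r, hr, by
      simpa only [mul_comm] using sum_sum_mul_size_mul fun l => hN (Sum.inr l)⟩
  obtain ⟨ν, hν⟩ : ∃ ν : A.Carrier →⋆ₐ[ℂ] C'.Carrier, MultiMatrix.HasMultiplicities ν _ :=
    MultiMatrix.exists_hasMultiplicities (fun l m => N (Sum.inl l) m) (congrFun hsize)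
  obtain ⟨ψ, hψ⟩ : ∃ ψ : C.Carrier →⋆ₐ[ℂ] C'.Carrier, MultiMatrix.HasMultiplicities ψ _ :=
    MultiMatrix.exists_hasMultiplicities (fun l m => N (Sum.inr l) m) fun _ => rfl
  exact ⟨C', hli, ν, ψ, isTracePreserving_of_hasMultiplicities hν fun l => hN (Sum.inl l),
    isTracePreserving_of_hasMultiplicities hψ fun l => hN (Sum.inr l),
    _, D, hψ, hD, fun l => hND (Sum.inr l)⟩

theorem block_trace_eq_of_linearIndependent (hC : LinearIndependent ℚ C.weight)
    {p q : C.Carrier} (hp : IsStarProjection p) (hq : IsStarProjection q)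
    (h : C.trace p = C.trace q) (m : Fin C.numBlocks) : (p m).trace = (q m).trace := by
  have hnat {p : C.Carrier} (hp : IsStarProjection p) (m : Fin C.numBlocks) :
      ∃ k : ℕ, (p m).trace = k :=
    exists_trace_eq_natCast ⟨congrFun hp.isIdempotentElem m, congrFun hp.isSelfAdjoint m⟩
  choose a ha using hnat hp
  choose b hb using hnat hq
  have hab : a = b := natCast_coeff_injective hC <| by
    simp only [trace, MultiMatrix.weightedTrace_apply, ha, hb] at h
    simpa only [mul_comm] using (by exact_mod_cast h :
      ∑ l, C.weight l * a l = ∑ l, C.weight l * b l)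
  rw [ha, hb, hab]

theorem exists_conjStarAlgAut_comp_eq_of_isTracePreserving (hC : LinearIndependent ℚ C.weight)
    {f g : A.Carrier →⋆ₐ[ℂ] C.Carrier} (hf : IsTracePreserving f) (hg : IsTracePreserving g) :
    ∃ U : unitary C.Carrier, ∀ x, Unitary.conjStarAlgAut ℂ _ U (f x) = g x := by
  let blockTrace (h : A.Carrier →⋆ₐ[ℂ] C.Carrier) (m : Fin C.numBlocks) : A.Carrier →ₗ[ℂ] ℂ :=
    Matrix.traceLinearMap _ ℂ ℂ ∘ₗ LinearMap.proj m ∘ₗ h.toAlgHom.toLinearMap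
  have hcomm (h : A.Carrier →⋆ₐ[ℂ] C.Carrier) (m : Fin C.numBlocks) (x y : A.Carrier) :
      blockTrace h m (x * y) = blockTrace h m (y * x) := by
    change (h (x * y) m).trace = (h (y * x) m).trace
    rw [map_mul, map_mul]
    exact Matrix.trace_mul_comm _ _
  refine MultiMatrix.exists_conjStarAlgAut_comp_eq_of_trace_eq fun x m =>
    LinearMap.congr_fun (f := blockTrace f m) (g := blockTrace g m)
      (MultiMatrix.tracial_ext (hcomm f m) (hcomm g m) fun l => ?_) x
  have he := MultiMatrix.isStarProjection_matrixUnit (κ := A.size) l 0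
  exact block_trace_eq_of_linearIndependent hC (he.map f) (he.map g)
    ((hf _).trans (hg _).symm) m

theorem exists_amalgam {i : A.Carrier →⋆ₐ[ℂ] A'.Carrier} {φ : A.Carrier →⋆ₐ[ℂ] C.Carrier}
    (hi : IsTracePreserving i) (hφ : IsTracePreserving φ) {ε : ℝ} (hε : 0 < ε) (hε' : ε < 1) :
    ∃ (C' : TracialMultiMatrix) (φ' : A'.Carrier →⋆ₐ[ℂ] C'.Carrier)
      (ψ : C.Carrier →⋆ₐ[ℂ] C'.Carrier), IsTracePreserving φ' ∧ IsTracePreserving ψ ∧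
        IsNearlyProportional ψ ε ∧ ∀ x, φ' (i x) = ψ (φ x) := by
  obtain ⟨C', hli, ν, ψ, hν, hψ, hprop⟩ := exists_joint_embedding A' C hε hε'
  obtain ⟨U, hU⟩ := exists_conjStarAlgAut_comp_eq_of_isTracePreserving hli
    (f := ν.comp i) (g := ψ.comp φ) (fun x => (hν _).trans (hi x)) fun x => (hψ _).trans (hφ x)
  exact ⟨C', (Unitary.conjStarAlgAut ℂ _ U : C'.Carrier →⋆ₐ[ℂ] C'.Carrier).comp ν, ψ,
    fun x => (MultiMatrix.weightedTrace_conjStarAlgAut _ U _).trans (hν x), hψ, hprop, hU⟩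

theorem exists_tower {A : ℕ → TracialMultiMatrix}
    {i : ∀ n, (A n).Carrier →⋆ₐ[ℂ] (A (n + 1)).Carrier} (hi : ∀ n, IsTracePreserving (i n))
    {ε : ℕ → ℝ} (hε : ∀ n, 0 < ε n) (hε' : ∀ n, ε n < 1) :
    ∃ (C : ℕ → TracialMultiMatrix) (φ : ∀ n, (A n).Carrier →⋆ₐ[ℂ] (C n).Carrier)
      (ψ : ∀ n, (C n).Carrier →⋆ₐ[ℂ] (C (n + 1)).Carrier),
      (∀ n, IsTracePreserving (φ n)) ∧ (∀ n, IsTracePreserving (ψ n)) ∧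
      (∀ n, IsNearlyProportional (ψ n) (ε n)) ∧ ∀ n x, φ (n + 1) (i n x) = ψ n (φ n x) := by
  let Stage (n : ℕ) : Type :=
    Σ C : TracialMultiMatrix, {φ : (A n).Carrier →⋆ₐ[ℂ] C.Carrier // IsTracePreserving φ}
  have hstep (n : ℕ) (S : Stage n) : ∃ (S' : Stage (n + 1)) (ψ : S.1.Carrier →⋆ₐ[ℂ] S'.1.Carrier),
      IsTracePreserving ψ ∧ IsNearlyProportional ψ (ε n) ∧
        ∀ x, S'.2.1 (i n x) = ψ (S.2.1 x) := by
    obtain ⟨C', φ', ψ, hφ', hψ⟩ := exists_amalgam (hi n) S.2.2 (hε n) (hε' n)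
    exact ⟨⟨C', φ', hφ'⟩, ψ, hψ⟩
  choose next ψ hψ hprop hcomm using hstep
  let T (n : ℕ) : Stage n := Nat.rec ⟨A 0, StarAlgHom.id ℂ _, fun _ => rfl⟩ next n
  exact ⟨fun n => (T n).1, fun n => (T n).2.1, fun n => ψ n (T n), fun n => (T n).2.2,
    fun n => hψ n (T n), fun n => hprop n (T n), fun n => hcomm n (T n)⟩

end TracialMultiMatrix

/-! ### Sequential limits of C*-algebras -/

section Completion

open UniformSpace UniformSpace.Completion

variable {P : Type*} [SeminormedRing P] [StarRing P] [NormedStarGroup P]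

noncomputable instance : Star (Completion P) := ⟨Completion.map star⟩

omit [NormedStarGroup P] in
theorem continuous_star_completion : Continuous (star : Completion P → Completion P) :=
  continuous_map

theorem coe_star_completion (x : P) : ((star x : P) : Completion P) = star (x : Completion P) :=
  (map_coe (starNormedAddGroupHom : NormedAddGroupHom P P).uniformContinuous x).symm

noncomputable instance : StarRing (Completion P) where
  star_involutive x := by
    induction x using induction_on with
    | hp =>
      exact isClosed_eq (continuous_star_completion.comp continuous_star_completion) continuous_id
    | ih x => rw [← coe_star_completion, ← coe_star_completion, star_star]
  star_mul x y := by
    induction x, y using induction_on₂ with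
    | hp =>
      exact isClosed_eq (continuous_star_completion.comp continuous_mul)
        ((continuous_star_completion.comp continuous_snd).mul
          (continuous_star_completion.comp continuous_fst))
    | ih x y => simp only [← coe_mul, ← coe_star_completion, star_mul]
  star_add x y := by
    induction x, y using induction_on₂ with
    | hp =>
      exact isClosed_eq (continuous_star_completion.comp continuous_add)
        ((continuous_star_completion.comp continuous_fst).add
          (continuous_star_completion.comp continuous_snd))
    | ih x y => simp only [← coe_add, ← coe_star_completion, star_add]

variable [NormedAlgebra ℂ P]

noncomputable instance : NormedAlgebra ℂ (Completion P) where
  norm_smul_le := norm_smul_le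

instance [StarModule ℂ P] : StarModule ℂ (Completion P) where
  star_smul r x := by
    induction x using induction_on with
    | hp =>
      exact isClosed_eq (continuous_star_completion.comp (continuous_const_smul r))
        ((continuous_const_smul _).comp continuous_star_completion)
    | ih x => simp only [← Completion.coe_smul, ← coe_star_completion, star_smul]

omit [NormedAlgebra ℂ P] in
theorem cstarRing_completion (h : ∀ x : P, ‖x‖ * ‖x‖ ≤ ‖star x * x‖) :
    CStarRing (Completion P) where
  norm_mul_self_le x := by
    induction x using induction_on with
    | hp =>
      exact isClosed_le (continuous_norm.mul continuous_norm)
        (continuous_norm.comp (continuous_star_completion.mul continuous_id))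
    | ih x => simpa only [← coe_star_completion, ← coe_mul, norm_coe] using h x

end Completion

section SequentialLimit

variable {C : ℕ → Type*} [∀ n, CStarAlgebra (C n)]

/-- The composite `C n → C (n + 1) → ⋯ → C m` of the connecting maps. -/
def transition (ψ : ∀ n, C n →⋆ₐ[ℂ] C (n + 1)) {n m : ℕ} (h : n ≤ m) : C n →⋆ₐ[ℂ] C m :=
  Nat.leRecOn (C := fun m => C n →⋆ₐ[ℂ] C m) h (fun {k} f => (ψ k).comp f) (StarAlgHom.id ℂ (C n))

variable {ψ : ∀ n, C n →⋆ₐ[ℂ] C (n + 1)}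

theorem transition_self (n : ℕ) (x : C n) : transition ψ le_rfl x = x := by
  rw [transition, Nat.leRecOn_self]
  rfl

theorem transition_succ {n m : ℕ} (h : n ≤ m) (x : C n) :
    transition ψ (h.trans m.le_succ) x = ψ m (transition ψ h x) := by
  rw [transition, Nat.leRecOn_succ h]
  rfl

theorem apply_transition_eq {X : Type*} {f : ∀ n, C n → X} (hf : ∀ n x, f (n + 1) (ψ n x) = f n x)
    {n m : ℕ} (h : n ≤ m) (x : C n) : f m (transition ψ h x) = f n x := by
  induction m, h using Nat.le_induction with
  | base => rw [transition_self]
  | succ m hm ih => rw [transition_succ hm, hf, ih]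

theorem transition_comp {n m : ℕ} (h : n + 1 ≤ m) (x : C n) :
    transition ψ h (ψ n x) = transition ψ (n.le_succ.trans h) x := by
  induction m, h using Nat.le_induction with
  | base => rw [transition_self, transition_succ le_rfl, transition_self]
  | succ m hm ih => rw [transition_succ hm, transition_succ (n.le_succ.trans hm), ih]

/-- `ι` exhibits the C*-algebra `L` as the limit of the sequence of inclusions `ψ`. -/
structure IsSeqLimit {L : Type*} [CStarAlgebra L] (ψ : ∀ n, C n →⋆ₐ[ℂ] C (n + 1))
    (ι : ∀ n, C n →⋆ₐ[ℂ] L) : Prop where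
  norm_map : ∀ n x, ‖ι n x‖ = ‖x‖
  map_succ : ∀ n x, ι (n + 1) (ψ n x) = ι n x
  dense : Dense (⋃ n, Set.range (ι n))

/-- The `*`-algebra of sequences that are eventually compatible with the connecting maps. -/
def compatSeq (ψ : ∀ n, C n →⋆ₐ[ℂ] C (n + 1)) : StarSubalgebra ℂ (∀ n, C n) where
  carrier := {x | ∀ᶠ n in Filter.atTop, x (n + 1) = ψ n (x n)}
  mul_mem' ha hb := by
    filter_upwards [ha, hb] with n hn hn'
    simp only [Pi.mul_apply, hn, hn', map_mul]
  add_mem' ha hb := by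
    filter_upwards [ha, hb] with n hn hn'
    simp only [Pi.add_apply, hn, hn', map_add]
  algebraMap_mem' r := .of_forall fun n => by
    simp only [Pi.algebraMap_apply, AlgHomClass.commutes]
  star_mem' ha := by
    filter_upwards [ha] with n hn
    simp only [Pi.star_apply, hn, map_star]

/-- The type of eventually compatible sequences, to be given the seminorm `lim ‖x n‖`; a type
synonym, since `compatSeq ψ` inherits the product topology. -/
def CompatSeq (ψ : ∀ n, C n →⋆ₐ[ℂ] C (n + 1)) : Type _ := compatSeq ψ

namespace CompatSeq

noncomputable instance : Ring (CompatSeq ψ) := inferInstanceAs (Ring (compatSeq ψ))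
noncomputable instance : Algebra ℂ (CompatSeq ψ) := inferInstanceAs (Algebra ℂ (compatSeq ψ))
noncomputable instance : StarRing (CompatSeq ψ) := inferInstanceAs (StarRing (compatSeq ψ))
noncomputable instance : StarModule ℂ (CompatSeq ψ) := inferInstanceAs (StarModule ℂ (compatSeq ψ))

noncomputable instance : Norm (CompatSeq ψ) := ⟨fun x => Filter.atTop.limUnder fun n => ‖x.1 n‖⟩

theorem tendsto_norm (x : CompatSeq ψ) :
    Filter.Tendsto (fun n => ‖x.1 n‖) Filter.atTop (nhds ‖x‖) := by
  obtain ⟨N, hN⟩ := Filter.eventually_atTop.1 x.2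
  have hanti : Antitone fun n => ‖x.1 (n + N)‖ := antitone_nat_of_succ_le fun n => by
    rw [Nat.add_right_comm, hN (n + N) (Nat.le_add_left _ _)]
    exact NonUnitalStarAlgHom.norm_apply_le _ _
  exact tendsto_nhds_limUnder ⟨_, (Filter.tendsto_add_atTop_iff_nat N).1 <|
    tendsto_atTop_ciInf hanti ⟨0, by rintro _ ⟨n, rfl⟩; exact norm_nonneg _⟩⟩

theorem norm_eq_of_eventually {x : CompatSeq ψ} {c : ℝ} (h : ∀ᶠ n in Filter.atTop, ‖x.1 n‖ = c) :
    ‖x‖ = c :=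
  tendsto_nhds_unique (tendsto_norm x)
    (tendsto_const_nhds.congr' (h.mono fun _ hn => hn.symm))

/-- The limit seminorm. -/
noncomputable def seminorm (ψ : ∀ n, C n →⋆ₐ[ℂ] C (n + 1)) : RingSeminorm (CompatSeq ψ) where
  toFun x := ‖x‖
  map_zero' := norm_eq_of_eventually (.of_forall fun _ => norm_zero)
  add_le' x y := le_of_tendsto_of_tendsto' (tendsto_norm (x + y))
    ((tendsto_norm x).add (tendsto_norm y)) fun _ => norm_add_le _ _
  neg' x := tendsto_nhds_unique (tendsto_norm (-x))
    ((tendsto_norm x).congr fun _ => (norm_neg _).symm)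
  mul_le' x y := le_of_tendsto_of_tendsto' (tendsto_norm (x * y))
    ((tendsto_norm x).mul (tendsto_norm y)) fun _ => norm_mul_le _ _

noncomputable instance : SeminormedRing (CompatSeq ψ) where
  __ : Ring (CompatSeq ψ) := inferInstance
  __ := (seminorm ψ).toAddGroupSeminorm.toSeminormedAddCommGroup
  norm_mul_le := (seminorm ψ).mul_le'

noncomputable instance : NormedAlgebra ℂ (CompatSeq ψ) where
  norm_smul_le r x := le_of_tendsto_of_tendsto' (tendsto_norm (r • x))
    ((tendsto_norm x).const_mul ‖r‖) fun n => norm_smul_le r (x.1 n)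

instance : NormedStarGroup (CompatSeq ψ) where
  norm_star_le x := le_of_tendsto_of_tendsto' (tendsto_norm (star x)) (tendsto_norm x)
    fun _ => (norm_star _).le

theorem norm_mul_norm_le_norm_star_mul_self (x : CompatSeq ψ) : ‖x‖ * ‖x‖ ≤ ‖star x * x‖ :=
  le_of_tendsto_of_tendsto' ((tendsto_norm x).mul (tendsto_norm x)) (tendsto_norm (star x * x))
    fun _ => CStarRing.norm_mul_self_le _

instance : CStarRing (UniformSpace.Completion (CompatSeq ψ)) :=
  cstarRing_completion norm_mul_norm_le_norm_star_mul_self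

noncomputable instance : CStarAlgebra (UniformSpace.Completion (CompatSeq ψ)) where

theorem coe_completion_eq {x y : CompatSeq ψ} (h : ∀ᶠ n in Filter.atTop, x.1 n = y.1 n) :
    (x : UniformSpace.Completion (CompatSeq ψ)) = y := by
  rw [← sub_eq_zero, ← UniformSpace.Completion.coe_sub, ← norm_eq_zero,
    UniformSpace.Completion.norm_coe]
  refine norm_eq_of_eventually (h.mono fun n hn => ?_)
  change ‖x.1 n - y.1 n‖ = 0
  rw [hn, sub_self, norm_zero]

/-- The sequence of images of `x : C n`, with `0` in the places before `n`. -/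
noncomputable def of {n : ℕ} (x : C n) : CompatSeq ψ :=
  ⟨fun m => if h : n ≤ m then transition ψ h x else 0, by
    filter_upwards [Filter.eventually_ge_atTop n] with m hm
    rw [dif_pos (hm.trans m.le_succ), dif_pos hm, transition_succ hm]⟩

theorem of_apply {n m : ℕ} (h : n ≤ m) (x : C n) : (of x : CompatSeq ψ).1 m = transition ψ h x :=
  dif_pos h

theorem coe_of_eq {n : ℕ} {x : C n} {y : CompatSeq ψ}
    (h : ∀ m (hm : n ≤ m), transition ψ hm x = y.1 m) :
    ((of x : CompatSeq ψ) : UniformSpace.Completion (CompatSeq ψ)) = y :=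
  coe_completion_eq <| (Filter.eventually_ge_atTop n).mono fun m hm => by rw [of_apply hm, h m hm]

variable (ψ) in
/-- The canonical map of `C n` into the completed limit. -/
noncomputable def toCompletion (n : ℕ) : C n →⋆ₐ[ℂ] UniformSpace.Completion (CompatSeq ψ) where
  toFun x := (of x : CompatSeq ψ)
  map_one' := (coe_of_eq fun _ _ => map_one _).trans (UniformSpace.Completion.coe_one _)
  map_zero' := (coe_of_eq fun _ _ => map_zero _).trans UniformSpace.Completion.coe_zero
  map_mul' x y := (coe_of_eq (y := of x * of y) fun m hm => by
    rw [map_mul, ← of_apply, ← of_apply]; rfl).trans (UniformSpace.Completion.coe_mul _ _)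
  map_add' x y := (coe_of_eq (y := of x + of y) fun m hm => by
    rw [map_add, ← of_apply, ← of_apply]; rfl).trans (UniformSpace.Completion.coe_add _ _)
  commutes' r := coe_of_eq (y := algebraMap ℂ _ r) fun _ _ => AlgHomClass.commutes _ r
  map_star' x := (coe_of_eq (y := star (of x)) fun m hm => by
    rw [map_star, ← of_apply]; rfl).trans (coe_star_completion _)

theorem dense_iUnion_range_toCompletion : Dense (⋃ n, Set.range (toCompletion ψ n)) := by
  refine UniformSpace.Completion.denseRange_coe.mono ?_
  rintro _ ⟨x, rfl⟩
  obtain ⟨N, hN⟩ := Filter.eventually_atTop.1 x.2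
  refine Set.mem_iUnion.2 ⟨N, x.1 N, coe_of_eq fun m hm => ?_⟩
  induction m, hm using Nat.le_induction with
  | base => exact transition_self N _
  | succ m hm ih => rw [transition_succ hm, ih, hN m hm]

theorem isSeqLimit_toCompletion (hψ : ∀ n x, ‖ψ n x‖ = ‖x‖) :
    IsSeqLimit ψ (toCompletion ψ) where
  norm_map n x := (UniformSpace.Completion.norm_coe _).trans <| norm_eq_of_eventually <|
    (Filter.eventually_ge_atTop n).mono fun m hm => by
      rw [of_apply hm, apply_transition_eq (f := fun n => (‖·‖)) hψ hm]
  map_succ n x := (coe_completion_eq <| (Filter.eventually_ge_atTop (n + 1)).mono fun m hm => by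
    rw [of_apply hm, of_apply (n.le_succ.trans hm), transition_comp])
  dense := dense_iUnion_range_toCompletion

end CompatSeq

namespace IsSeqLimit

variable {B L : Type*} [CStarAlgebra B] [CStarAlgebra L] {ι : ∀ n, C n →⋆ₐ[ℂ] B}

theorem denseRange (hι : IsSeqLimit ψ ι) : DenseRange fun p : Σ n, C n => ι p.1 p.2 := by
  rw [DenseRange, Set.range_sigma_eq_iUnion_range]
  exact hι.dense

theorem map_transition (hι : IsSeqLimit ψ ι) {n m : ℕ} (h : n ≤ m) (x : C n) :
    ι m (transition ψ h x) = ι n x :=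
  apply_transition_eq (f := fun n => ι n) hι.map_succ h x

theorem monotone_range (h : ∀ n x, ι (n + 1) (ψ n x) = ι n x) :
    Monotone fun n => (ι n).range :=
  monotone_nat_of_le_succ fun n => by
    rintro _ ⟨x, rfl⟩
    exact ⟨ψ n x, h n x⟩

/- The closure of the joint graph of the pairs `(ι n, θ n)` is itself the graph of an isometry. -/
theorem exists_injective_starAlgHom (hι : IsSeqLimit ψ ι) {θ : ∀ n, C n →⋆ₐ[ℂ] L}
    (hθ_norm : ∀ n x, ‖θ n x‖ = ‖x‖) (hθ : ∀ n x, θ (n + 1) (ψ n x) = θ n x) :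
    ∃ Θ : B →⋆ₐ[ℂ] L, Function.Injective Θ := by
  let graph (n : ℕ) : StarSubalgebra ℂ (B × L) := ((ι n).prod (θ n)).range
  have hgraph : ((⨆ n, graph n : StarSubalgebra ℂ (B × L)) : Set (B × L)) = ⋃ n, graph n :=
    StarSubalgebra.coe_iSup_of_directed (monotone_range (ψ := ψ) fun n x =>
      Prod.ext (hι.map_succ n x) (hθ n x)).directed_le
  let G := (⨆ n, graph n).topologicalClosure
  have hnorm (p : G) : ‖p.1.1‖ = ‖p.1.2‖ := by
    refine closure_minimal (t := {p : B × L | ‖p.1‖ = ‖p.2‖}) ?_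
      (isClosed_eq (by fun_prop) (by fun_prop)) p.2
    rw [hgraph]
    refine Set.iUnion_subset fun n => ?_
    rintro _ ⟨x, rfl⟩
    exact (hι.norm_map n x).trans (hθ_norm n x).symm
  let π : G →⋆ₐ[ℂ] B := (StarAlgHom.fst ℂ B L).comp G.subtype
  let ρ : G →⋆ₐ[ℂ] L := (StarAlgHom.snd ℂ B L).comp G.subtype
  have hπ : Isometry π := AddMonoidHomClass.isometry_of_norm π fun p =>
    (max_eq_left (hnorm p).ge).symm
  have hρ : Isometry ρ := AddMonoidHomClass.isometry_of_norm ρ fun p =>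
    (max_eq_right (hnorm p).le).symm
  have hπ_dense : DenseRange π := hι.dense.mono <| Set.iUnion_subset fun n => by
    rintro _ ⟨x, rfl⟩
    refine ⟨⟨(ι n x, θ n x), StarSubalgebra.le_topologicalClosure _ ?_⟩, rfl⟩
    exact le_iSup graph n ⟨x, rfl⟩
  have hπ_surj : Function.Surjective π := Set.range_eq_univ.1 <|
    hπ.isClosedEmbedding.isClosed_range.closure_eq.symm.trans hπ_dense.closure_eq
  let e : G ≃⋆ₐ[ℂ] B := StarAlgEquiv.ofBijective π ⟨hπ.injective, hπ_surj⟩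
  exact ⟨ρ.comp (e.symm : B →⋆ₐ[ℂ] G), hρ.injective.comp e.symm.injective⟩

end IsSeqLimit

end SequentialLimit

/-! ### Tracial states -/

/-- Tracial states of a unital `*`-algebra; for the carrier of a `UnitalCStarAlg` these are the
functionals satisfying `UnitalCStarAlg.IsTracialState`. -/
structure IsTracialState {A : Type*} [Ring A] [StarRing A] [Algebra ℂ A] (τ : A →ₗ[ℂ] ℂ) :
    Prop where
  map_one : τ 1 = 1
  nonneg : ∀ a, 0 ≤ τ (star a * a)
  mul_comm : ∀ a b, τ (a * b) = τ (b * a)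

theorem isTracialState_iff {B : UnitalCStarAlg} {τ : B.carrier →ₗ[ℂ] ℂ} :
    IsTracialState τ ↔ B.IsTracialState τ :=
  ⟨fun h => ⟨h.map_one, h.nonneg, h.mul_comm⟩, fun h => ⟨h.1, h.2.1, h.2.2⟩⟩

section CStarAlgebra

variable {A : Type*} [CStarAlgebra A] {τ : A →ₗ[ℂ] ℂ}

theorem map_nonneg_of_spectralOrder (hτ : ∀ a, 0 ≤ τ (star a * a)) :
    letI := CStarAlgebra.spectralOrder A
    ∀ a : A, 0 ≤ a → 0 ≤ τ a := by
  let := CStarAlgebra.spectralOrder A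
  have := CStarAlgebra.spectralOrderedRing A
  intro a ha
  obtain ⟨b, rfl⟩ := CStarAlgebra.nonneg_iff_eq_star_mul_self.1 ha
  exact hτ b

theorem norm_map_star_mul_le (hτ : ∀ a, 0 ≤ τ (star a * a)) (a b : A) :
    ‖τ (star a * b)‖ ≤ √(τ (star a * a)).re * √(τ (star b * b)).re := by
  let := CStarAlgebra.spectralOrder A
  have := CStarAlgebra.spectralOrderedRing A
  let f : A →ₚ[ℂ] ℂ := PositiveLinearMap.mk₀ τ (map_nonneg_of_spectralOrder hτ)
  have h := norm_inner_le_norm (𝕜 := ℂ) (f.toPreGNS a) (f.toPreGNS b)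
  rwa [PositiveLinearMap.preGNS_norm_def, PositiveLinearMap.preGNS_norm_def,
    PositiveLinearMap.preGNS_inner_def] at h

theorem re_map_star_mul_self_le (hτ : ∀ a, 0 ≤ τ (star a * a)) (a : A) :
    (τ (star a * a)).re ≤ ‖a‖ ^ 2 * (τ 1).re := by
  let := CStarAlgebra.spectralOrder A
  have := CStarAlgebra.spectralOrderedRing A
  have h := map_nonneg_of_spectralOrder hτ _
    (sub_nonneg.2 (CStarAlgebra.star_mul_le_algebraMap_norm_sq (a := a)))
  rw [Algebra.algebraMap_eq_smul_one, map_sub, τ.map_smul_of_tower, sub_nonneg] at h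
  simpa only [Complex.smul_re, smul_eq_mul] using (Complex.le_def.1 h).1

theorem norm_map_le_re_map_one_mul (hτ : ∀ a, 0 ≤ τ (star a * a)) (a : A) :
    ‖τ a‖ ≤ (τ 1).re * ‖a‖ := by
  have hone : 0 ≤ (τ 1).re := (Complex.nonneg_iff.1 (by simpa using hτ 1)).1
  calc ‖τ a‖ ≤ √(τ 1).re * √(τ (star a * a)).re := by
        simpa only [star_one, one_mul] using norm_map_star_mul_le hτ 1 a
    _ ≤ √(τ 1).re * √(‖a‖ ^ 2 * (τ 1).re) := by gcongr; exact re_map_star_mul_self_le hτ a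
    _ = (τ 1).re * ‖a‖ := by
        rw [Real.sqrt_mul (sq_nonneg _), Real.sqrt_sq (norm_nonneg a), mul_left_comm,
          Real.mul_self_sqrt hone, mul_comm]

namespace IsTracialState

theorem norm_map_le (hτ : IsTracialState τ) (a : A) : ‖τ a‖ ≤ ‖a‖ := by
  simpa [hτ.map_one] using norm_map_le_re_map_one_mul hτ.nonneg a

theorem continuous (hτ : IsTracialState τ) : Continuous τ :=
  (τ.mkContinuous 1 fun a => by simpa only [one_mul] using hτ.norm_map_le a).continuous

end IsTracialState

end CStarAlgebra

open scoped UnitalCStarAlg in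
/- The elements `a` with `τ (b * a) = 0` for all `b` form a proper closed two-sided ideal. -/
theorem eq_zero_of_isTracialState_of_isSimple {B : UnitalCStarAlg} (hB : B.IsSimple)
    {τ : B.carrier →ₗ[ℂ] ℂ} (hτ : IsTracialState τ) {a : B.carrier} (ha : τ (star a * a) = 0) :
    a = 0 := by
  let I : TwoSidedIdeal B.carrier := TwoSidedIdeal.mk' {a | ∀ b, τ (b * a) = 0} (by simp)
    (fun hx hy b => by rw [mul_add, map_add, hx, hy, add_zero])
    (fun hx b => by rw [mul_neg, map_neg, hx, neg_zero])
    (fun hy b => by rw [← mul_assoc]; exact hy _)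
    (fun hx b => by rw [← mul_assoc, hτ.mul_comm, ← mul_assoc]; exact hx _)
  have hI (x : B.carrier) : x ∈ I ↔ ∀ b, τ (b * x) = 0 := TwoSidedIdeal.mem_mk' _ _ _ _ _ _ _
  have hclosed : IsClosed (I : Set B.carrier) := by
    have : (I : Set B.carrier) = ⋂ b, {x | τ (b * x) = 0} := by
      ext x
      simp only [SetLike.mem_coe, hI, Set.mem_iInter, Set.mem_ofPred_eq]
    rw [this]
    exact isClosed_iInter fun b =>
      isClosed_eq (hτ.continuous.comp (continuous_const_mul b)) continuous_const
  have haI : a ∈ I := (hI a).2 fun b => by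
    have h := norm_map_star_mul_le hτ.nonneg (star b) a
    rwa [ha, Complex.zero_re, Real.sqrt_zero, mul_zero, star_star, norm_le_zero_iff] at h
  rcases hB I hclosed with h | h
  · exact (TwoSidedIdeal.mem_bot _).1 (h ▸ haI)
  · have h1 : τ (1 * 1) = 0 := (hI 1).1 (h ▸ TwoSidedIdeal.mem_top _) 1
    rw [one_mul, hτ.map_one] at h1
    exact absurd h1 one_ne_zero

section SequentialLimit

variable {A L : Type*} [CStarAlgebra A] [CStarAlgebra L]

theorem IsTracialState.exists_extension {τ : A →ₗ[ℂ] ℂ} (hτ : IsTracialState τ) {j : A →⋆ₐ[ℂ] L}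
    (hj : ∀ a, ‖j a‖ = ‖a‖) : ∃ f : L →L[ℂ] ℂ, ‖f‖ ≤ 1 ∧ ∀ a, f (j a) = τ a := by
  have hj_inj : Function.Injective j := (AddMonoidHomClass.isometry_of_norm j hj).injective
  let e := LinearEquiv.ofInjective j.toAlgHom.toLinearMap hj_inj
  let g : j.toAlgHom.toLinearMap.range →L[ℂ] ℂ := (τ ∘ₗ e.symm.toLinearMap).mkContinuous 1 <| by
    intro y
    obtain ⟨x, rfl⟩ := e.surjective y
    have hx : ‖e x‖ = ‖x‖ := hj x
    rw [one_mul, hx, LinearMap.comp_apply, LinearEquiv.coe_coe, e.symm_apply_apply]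
    exact hτ.norm_map_le x
  obtain ⟨f, hf, hf_norm⟩ := exists_extension_norm_eq _ g
  refine ⟨f, hf_norm.trans_le (LinearMap.mkContinuous_norm_le _ zero_le_one _), fun x => ?_⟩
  exact (hf (e x)).trans (congrArg τ (e.symm_apply_apply x))

theorem exists_tendsto_hyperfilter {E : Type*} [SeminormedAddCommGroup E] [NormedSpace ℂ E]
    {f : ℕ → E →L[ℂ] ℂ} {K : ℝ} (hf : ∀ n, ‖f n‖ ≤ K) :
    ∃ g : E →L[ℂ] ℂ, ∀ x, Filter.Tendsto (f · x) (Filter.hyperfilter ℕ) (nhds (g x)) := by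
  have hlim (x : E) : ∃ z : ℂ, ‖z‖ ≤ K * ‖x‖ ∧
      Filter.Tendsto (f · x) (Filter.hyperfilter ℕ) (nhds z) := by
    obtain ⟨z, hz, hfz⟩ := (isCompact_closedBall (0 : ℂ) (K * ‖x‖)).ultrafilter_le_nhds
      ((Filter.hyperfilter ℕ).map (f · x)) <| Filter.le_principal_iff.2 <|
        Filter.Eventually.of_forall (f := (Filter.hyperfilter ℕ : Filter ℕ)) fun n =>
          mem_closedBall_zero_iff.2 ((f n).le_of_opNorm_le (hf n) x)
    exact ⟨z, mem_closedBall_zero_iff.1 hz, hfz⟩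
  choose g hg hfg using hlim
  let G : E →ₗ[ℂ] ℂ :=
    { toFun := g
      map_add' x y := tendsto_nhds_unique (hfg (x + y)) <| by
        simpa only [map_add] using (hfg x).add (hfg y)
      map_smul' c x := tendsto_nhds_unique (hfg (c • x)) <| by
        simpa only [map_smul, RingHom.id_apply] using (hfg x).const_smul c }
  exact ⟨G.mkContinuous K hg, hfg⟩

variable {C : ℕ → Type*} [∀ n, CStarAlgebra (C n)] {ψ : ∀ n, C n →⋆ₐ[ℂ] C (n + 1)}
  {ι : ∀ n, C n →⋆ₐ[ℂ] L}

theorem IsSeqLimit.exists_isTracialState (hι : IsSeqLimit ψ ι) {τ : ∀ n, C n →ₗ[ℂ] ℂ}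
    (hτ : ∀ n, IsTracialState (τ n)) : ∃ τ : L →ₗ[ℂ] ℂ, IsTracialState τ := by
  choose f hf_norm hf using fun n => (hτ n).exists_extension (hι.norm_map n)
  obtain ⟨g, hg⟩ := exists_tendsto_hyperfilter hf_norm
  have hf_transition {n m : ℕ} (h : n ≤ m) (x : C n) : f m (ι n x) = τ m (transition ψ h x) := by
    rw [← hf, hι.map_transition]
  have hge (n : ℕ) : ∀ᶠ m in (Filter.hyperfilter ℕ : Filter ℕ), n ≤ m :=
    Nat.hyperfilter_le_atTop (Filter.eventually_ge_atTop n)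
  refine ⟨g, ?_, fun a => ?_, fun a b => ?_⟩
  · refine tendsto_nhds_unique (hg 1) (tendsto_const_nhds.congr fun n => ?_)
    rw [← map_one (ι n), hf, (hτ n).map_one]
  · refine hι.denseRange.induction_on a (isClosed_le continuous_const (by fun_prop)) ?_
    rintro ⟨n, x⟩
    refine ge_of_tendsto (hg _) ((hge n).mono fun m hm => ?_)
    rw [← map_star, ← map_mul, hf_transition hm, map_mul, map_star]
    exact (hτ m).nonneg _
  · refine hι.denseRange.induction_on₂ (p := fun a b => g (a * b) = g (b * a))
      (isClosed_eq (by fun_prop) (by fun_prop)) ?_ a b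
    rintro ⟨n, x⟩ ⟨n', y⟩
    refine tendsto_nhds_unique (hg _) ((hg _).congr' ?_)
    filter_upwards [hge n, hge n'] with m hn hn'
    rw [← hι.map_transition hn, ← hι.map_transition hn', ← map_mul, ← map_mul, hf, hf,
      (hτ m).mul_comm]

end SequentialLimit

namespace MultiMatrix

variable {ι : Type*} {κ : ι → ℕ}

theorem weightedTrace_star_mul_self_nonneg [Fintype ι] {w : ι → ℝ} (hw : ∀ l, 0 ≤ w l)
    (x : MultiMatrix κ) : 0 ≤ weightedTrace w (star x * x) := by
  rw [weightedTrace_apply]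
  exact Finset.sum_nonneg fun l _ => mul_nonneg (Complex.zero_le_real.2 (hw l))
    (Matrix.posSemidef_conjTranspose_mul_self (x l)).trace_nonneg

theorem isTracialState_weightedTrace [Fintype ι] {w : ι → ℝ} (hw : ∀ l, 0 ≤ w l)
    (hw1 : ∑ l, w l * κ l = 1) :
    IsTracialState (weightedTrace w : MultiMatrix κ →ₗ[ℂ] ℂ) where
  map_one := by rw [weightedTrace_one, hw1, Complex.ofReal_one]
  nonneg := weightedTrace_star_mul_self_nonneg hw
  mul_comm := weightedTrace_mul_comm w

theorem exists_isTracialState [Finite ι] [Nonempty ι] [∀ l, NeZero (κ l)] :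
    ∃ τ : MultiMatrix κ →ₗ[ℂ] ℂ, IsTracialState τ := by
  have := Fintype.ofFinite ι
  have hpos : (0 : ℝ) < ∑ l, (κ l : ℝ) :=
    Finset.sum_pos (fun l _ => Nat.cast_pos.2 (NeZero.pos (κ l))) Finset.univ_nonempty
  refine ⟨weightedTrace fun _ => (∑ l, (κ l : ℝ))⁻¹,
    isTracialState_weightedTrace (fun _ => (inv_pos.2 hpos).le) ?_⟩
  rw [← Finset.mul_sum, inv_mul_cancel₀ hpos.ne']

end MultiMatrix

theorem TracialMultiMatrix.isTracialState_trace (C : TracialMultiMatrix) :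
    IsTracialState C.trace :=
  MultiMatrix.isTracialState_weightedTrace (fun l => (C.weight_pos l).le) C.sum_weight_mul_size

section AF

open scoped UnitalCStarAlg

variable {B : UnitalCStarAlg}

theorem exists_isSeqLimit_of_isAF (hB : B.IsAF) :
    ∃ (k : ℕ → ℕ) (κ : ∀ n, Fin (k n) → ℕ)
      (i : ∀ n, MultiMatrix (κ n) →⋆ₐ[ℂ] MultiMatrix (κ (n + 1)))
      (j : ∀ n, MultiMatrix (κ n) →⋆ₐ[ℂ] B.carrier),
      (∀ n l, NeZero (κ n l)) ∧ IsSeqLimit i j := by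
  obtain ⟨S, hmono, hfin, hdense⟩ := hB
  have hclosed (n : ℕ) : IsClosed (S n : Set B.carrier) :=
    have := hfin n
    Submodule.closed_of_finiteDimensional (S n).toSubalgebra.toSubmodule
  choose k κ hκ e using fun n => exists_starAlgEquiv_multiMatrix (S n)
  let e (n : ℕ) : S n ≃⋆ₐ[ℂ] MultiMatrix (κ n) := (e n).some
  let j (n : ℕ) : MultiMatrix (κ n) →⋆ₐ[ℂ] B.carrier :=
    (S n).subtype.comp ((e n).symm : MultiMatrix (κ n) →⋆ₐ[ℂ] S n)
  have hj_range (n : ℕ) : Set.range (j n) = S n := by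
    ext x
    refine ⟨?_, fun hx => ⟨e n ⟨x, hx⟩, by simp [j]⟩⟩
    rintro ⟨y, rfl⟩
    exact ((e n).symm y).2
  refine ⟨k, κ, fun n => ((e (n + 1) : S (n + 1) →⋆ₐ[ℂ] MultiMatrix (κ (n + 1))).comp
    (StarSubalgebra.inclusion (hmono n.le_succ))).comp ((e n).symm : MultiMatrix (κ n) →⋆ₐ[ℂ] S n),
    j, hκ, ⟨fun n => ?_, fun n x => by simp [j], by simpa only [hj_range] using hdense⟩⟩
  exact NonUnitalStarAlgHom.norm_map (j n) (Subtype.val_injective.comp (e n).symm.injective)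

theorem exists_isTracialState_of_isAF [Nontrivial B.carrier] (hB : B.IsAF) :
    ∃ τ : B.carrier →ₗ[ℂ] ℂ, IsTracialState τ := by
  obtain ⟨k, κ, i, j, hκ, hj⟩ := exists_isSeqLimit_of_isAF hB
  have (n : ℕ) : Nonempty (Fin (k n)) := by
    by_contra h
    have := not_nonempty_iff.1 h
    have h01 : j n 1 = j n 0 := congrArg (j n) (Subsingleton.elim _ _)
    rw [map_one, map_zero] at h01
    exact one_ne_zero h01
  choose τ hτ using fun n => MultiMatrix.exists_isTracialState (κ := κ n)
  exact hj.exists_isTracialState hτ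

end AF

/-! ### Simplicity of limits with positive multiplicities -/

theorem norm_le_one_of_isStarProjection_star_mul_self {A : Type*} [NonUnitalNormedRing A]
    [StarRing A] [CStarRing A] {v : A} (h : IsStarProjection (star v * v)) : ‖v‖ ≤ 1 := by
  have hle := h.norm_le
  rw [CStarRing.norm_star_mul_self] at hle
  exact (abs_le_one_iff_mul_self_le_one.2 hle |> le_of_abs_le)

theorem isStarProjection_single {n : Type*} [Fintype n] [DecidableEq n] (o : n) :
    IsStarProjection (Matrix.single o o 1 : Matrix n n ℂ) where
  isIdempotentElem := by rw [IsIdempotentElem, Matrix.single_mul_single_same, one_mul]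
  isSelfAdjoint := by
    rw [IsSelfAdjoint, Matrix.star_eq_conjTranspose, Matrix.conjTranspose_single, star_one]

section

variable {n : Type*} [Fintype n] [DecidableEq n]

open scoped MatrixOrder in
theorem exists_eigenvalues_eq_norm_sq [Nonempty n] (M : Matrix n n ℂ) :
    ∃ i, (Matrix.isHermitian_conjTranspose_mul_self M).eigenvalues i = ‖M‖ ^ 2 := by
  have h : ‖star M * M‖ ∈ spectrum ℝ (star M * M) :=
    CStarAlgebra.norm_mem_spectrum_of_nonneg (star_mul_self_nonneg M)
  rw [CStarRing.norm_star_mul_self, ← sq] at h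
  rwa [Matrix.star_eq_conjTranspose,
    (Matrix.isHermitian_conjTranspose_mul_self M).spectrum_real_eq_range_eigenvalues] at h

theorem exists_top_singular_vector (M : Matrix n n ℂ) (o : n) :
    ∃ b : Matrix n n ℂ, star b * b = Matrix.single o o 1 ∧
      star M * M * b = ((‖M‖ ^ 2 : ℝ) : ℂ) • b := by
  have : Nonempty n := ⟨o⟩
  obtain ⟨i, hi⟩ := exists_eigenvalues_eq_norm_sq M
  have hM := Matrix.isHermitian_conjTranspose_mul_self M
  set U : Matrix n n ℂ := hM.eigenvectorUnitary.1
  have hU : star U * U = 1 := Unitary.coe_star_mul_self hM.eigenvectorUnitary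
  have hdiag : star M * M * U = U * Matrix.diagonal (RCLike.ofReal ∘ hM.eigenvalues) := by
    rw [Matrix.star_eq_conjTranspose M]
    conv_lhs => rw [hM.spectral_theorem]
    rw [Unitary.conjStarAlgAut_apply, mul_assoc _ _ U, hU, mul_one]
  refine ⟨U * Matrix.single i o 1, ?_, ?_⟩
  · rw [star_mul, mul_assoc, ← mul_assoc (star U), hU, one_mul,
      Matrix.star_eq_conjTranspose, Matrix.conjTranspose_single, star_one,
      Matrix.single_mul_single_same, one_mul]
  · have hsingle (d : n → ℂ) :
        Matrix.diagonal d * Matrix.single i o 1 = d i • Matrix.single i o 1 := by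
      ext a b
      by_cases h : i = a <;> simp [Matrix.diagonal_mul, Matrix.single_apply, h]
    rw [← mul_assoc, hdiag, mul_assoc, hsingle, Matrix.mul_smul, Function.comp_apply, hi]
    rfl

theorem exists_contractions_mul_mul_eq_norm_smul_single {M : Matrix n n ℂ} (hM : M ≠ 0) (o : n) :
    ∃ a b : Matrix n n ℂ, ‖a‖ ≤ 1 ∧ ‖b‖ ≤ 1 ∧
      a * M * b = (‖M‖ : ℂ) • Matrix.single o o 1 := by
  obtain ⟨b, hb, hMb⟩ := exists_top_singular_vector M o
  have hM_norm : (‖M‖ : ℂ) ≠ 0 := by simpa using hM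
  have hcompress : star b * star M * M * b = ((‖M‖ : ℂ) ^ 2) • Matrix.single o o 1 := by
    rw [mul_assoc (star b), mul_assoc (star b), hMb, Matrix.mul_smul, hb, Complex.ofReal_pow]
  set c : Matrix n n ℂ := (‖M‖ : ℂ)⁻¹ • (M * b)
  have hstar : star c = (‖M‖ : ℂ)⁻¹ • (star b * star M) := by
    rw [star_smul, star_mul, ← Complex.ofReal_inv, Complex.star_def, Complex.conj_ofReal]
  have hc : star c * c = Matrix.single o o 1 := by
    rw [hstar, smul_mul_smul_comm, ← mul_assoc, hcompress, smul_smul, ← sq, inv_pow,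
      inv_mul_cancel₀ (pow_ne_zero 2 hM_norm), one_smul]
  refine ⟨star c, b, ?_, ?_, ?_⟩
  · rw [norm_star]
    exact norm_le_one_of_isStarProjection_star_mul_self (hc ▸ isStarProjection_single o)
  · exact norm_le_one_of_isStarProjection_star_mul_self (hb ▸ isStarProjection_single o)
  · rw [hstar, smul_mul_assoc, smul_mul_assoc, hcompress, smul_smul, sq,
      inv_mul_cancel_left₀ hM_norm]

end

theorem MultiMatrix.exists_contractions_mul_mul_eq_norm_smul_matrixUnit {ι : Type*} [Fintype ι]
    [DecidableEq ι] {κ : ι → ℕ} [∀ l, NeZero (κ l)] {y : MultiMatrix κ} (hy : y ≠ 0) :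
    ∃ (l : ι) (a b : MultiMatrix κ), ‖a‖ ≤ 1 ∧ ‖b‖ ≤ 1 ∧
      a * y * b = (‖y‖ : ℂ) • matrixUnit (κ := κ) l 0 0 := by
  obtain ⟨l₀, -⟩ := Function.ne_iff.1 hy
  have : Nonempty ι := ⟨l₀⟩
  obtain ⟨l, hl⟩ := Finite.exists_max fun l => ‖y l‖
  have hnorm : ‖y l‖ = ‖y‖ :=
    le_antisymm (norm_le_pi_norm y l) ((pi_norm_le_iff_of_nonneg (norm_nonneg _)).2 hl)
  have hyl : y l ≠ 0 := norm_ne_zero_iff.1 (hnorm ▸ norm_ne_zero_iff.2 hy)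
  obtain ⟨a, b, ha, hb, hab⟩ := exists_contractions_mul_mul_eq_norm_smul_single hyl 0
  have hsingle (x : Matrix (Fin (κ l)) (Fin (κ l)) ℂ) : ‖(Pi.single l x : MultiMatrix κ)‖ = ‖x‖ :=
    Pi.norm_single (G := fun l => Matrix (Fin (κ l)) (Fin (κ l)) ℂ) x
  refine ⟨l, Pi.single l a, Pi.single l b, (hsingle a).trans_le ha, (hsingle b).trans_le hb, ?_⟩
  rw [← Pi.single_mul_left, ← Pi.single_mul, hab, hnorm, matrixUnit, Pi.single_smul]

theorem mem_of_isIdempotentElem_of_norm_sub_lt_one {L : Type*} [NormedRing L] [CompleteSpace L]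
    {I : TwoSidedIdeal L} {p z : L} (hp : IsIdempotentElem p) (hz : z ∈ I) (h : ‖p - z‖ < 1) :
    p ∈ I := by
  have hpz : p = p * z * ((Units.oneSub (p - z) h)⁻¹ : Lˣ) := by
    rw [Units.eq_mul_inv_iff_mul_eq, Units.val_oneSub, mul_sub, mul_sub, mul_one, hp.eq]
    abel
  rw [hpz]
  exact I.mul_mem_right _ _ (I.mul_mem_left _ _ hz)

theorem eq_top_of_one_mem {L : Type*} [Ring L] {I : TwoSidedIdeal L} (h : 1 ∈ I) : I = ⊤ :=
  eq_top_iff.2 fun x _ => mul_one x ▸ I.mul_mem_left x 1 h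

theorem MultiMatrix.eq_top_of_forall_block_ne_zero {ι : Type*} [Finite ι] {κ : ι → ℕ}
    {L : Type*} [Ring L] [Algebra ℂ L] (f : MultiMatrix κ →ₐ[ℂ] L) {I : TwoSidedIdeal L}
    {x : MultiMatrix κ} (hx : f x ∈ I) (hne : ∀ m, x m ≠ 0) : I = ⊤ := by
  classical
  have := Fintype.ofFinite ι
  have hunit (m : ι) (d : Fin (κ m)) : f (matrixUnit m d d) ∈ I := by
    obtain ⟨a, b, hab⟩ : ∃ a b, x m a b ≠ 0 := by
      by_contra! h
      exact hne m (Matrix.ext h)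
    have hentry : f (matrixUnit m d d) =
        f ((x m a b)⁻¹ • matrixUnit m d a) * f x * f (matrixUnit m b d) := by
      rw [← map_mul, ← map_mul, smul_mul_assoc, smul_mul_assoc, matrixUnit_mul_mul_matrixUnit,
        smul_smul, inv_mul_cancel₀ hab, one_smul]
    rw [hentry]
    exact I.mul_mem_right _ _ (I.mul_mem_left _ _ hx)
  refine eq_top_of_one_mem ?_
  rw [← map_one f, ← sum_matrixUnit_diag, map_sum]
  refine sum_mem fun m _ => ?_
  rw [map_sum]
  exact sum_mem fun d _ => hunit m d

theorem MultiMatrix.HasMultiplicities.map_matrixUnit_ne_zero {ι ι' : Type*} [Fintype ι]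
    [DecidableEq ι] {κ : ι → ℕ} {κ' : ι' → ℕ} {ψ : MultiMatrix κ →⋆ₐ[ℂ] MultiMatrix κ'}
    {N : ι → ι' → ℕ} (hψ : HasMultiplicities ψ N) {l : ι} {m : ι'} (hN : N l m ≠ 0)
    (a : Fin (κ l)) : ψ (matrixUnit l a a) m ≠ 0 := by
  intro h
  have htrace := hψ (matrixUnit l a a) m
  rw [h, Matrix.trace_zero, Fintype.sum_eq_single l, matrixUnit, Pi.single_eq_same,
    Matrix.trace_single_eq_same, mul_one] at htrace
  · exact hN (Nat.cast_eq_zero.1 htrace.symm)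
  · intro l' hl'
    rw [matrixUnit, Pi.single_eq_of_ne hl', Matrix.trace_zero, mul_zero]

namespace IsSeqLimit

variable {ι : ℕ → Type*} [∀ n, Fintype (ι n)] {κ : ∀ n, ι n → ℕ}
  {ψ : ∀ n, MultiMatrix (κ n) →⋆ₐ[ℂ] MultiMatrix (κ (n + 1))}
  {L : Type*} [CStarAlgebra L] {j : ∀ n, MultiMatrix (κ n) →⋆ₐ[ℂ] L}

theorem exists_matrixUnit_mem [∀ n, DecidableEq (ι n)] [∀ n l, NeZero (κ n l)] (hj : IsSeqLimit ψ j)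
    {I : TwoSidedIdeal L} (hI : I ≠ ⊥) :
    ∃ (n : ℕ) (l : ι n), j n (MultiMatrix.matrixUnit l 0 0) ∈ I := by
  obtain ⟨x, hx, hx0⟩ : ∃ x ∈ I, x ≠ 0 := by
    by_contra! h
    exact hI (eq_bot_iff.2 fun x hx => (TwoSidedIdeal.mem_bot L).2 (h x hx))
  obtain ⟨⟨n, y⟩, hxy⟩ := hj.denseRange.exists_dist_lt x (half_pos (norm_pos_iff.2 hx0))
  replace hxy : ‖j n y - x‖ < ‖x‖ / 2 := by rwa [dist_comm, dist_eq_norm] at hxy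
  have hclose : ‖j n y - x‖ < ‖y‖ := by
    have := norm_le_insert (j n y) x
    rw [hj.norm_map] at this
    linarith
  have hy : 0 < ‖y‖ := (norm_nonneg _).trans_lt hclose
  obtain ⟨l, a, b, ha, hb, hab⟩ :=
    MultiMatrix.exists_contractions_mul_mul_eq_norm_smul_matrixUnit (norm_pos_iff.1 hy)
  set e : MultiMatrix (κ n) := MultiMatrix.matrixUnit l 0 0
  set z := (‖y‖ : ℂ)⁻¹ • (j n a * x * j n b) with hz
  have hzI : z ∈ I := by
    rw [hz, ← smul_mul_assoc, ← smul_mul_assoc]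
    exact I.mul_mem_right _ _ (I.mul_mem_left _ _ hx)
  have hsub : j n e - z = (‖y‖ : ℂ)⁻¹ • (j n a * (j n y - x) * j n b) := by
    rw [mul_sub, sub_mul, ← map_mul, ← map_mul, hab, map_smul, smul_sub, smul_smul,
      inv_mul_cancel₀ (Complex.ofReal_ne_zero.2 hy.ne'), one_smul]
  have hnorm : ‖j n e - z‖ < 1 := by
    rw [hsub, norm_smul, norm_inv, Complex.norm_real, norm_norm, inv_mul_lt_iff₀ hy, mul_one]
    calc ‖j n a * (j n y - x) * j n b‖ ≤ ‖j n a‖ * ‖j n y - x‖ * ‖j n b‖ := norm_mul₃_le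
      _ ≤ 1 * ‖j n y - x‖ * 1 := by rw [hj.norm_map, hj.norm_map]; gcongr
      _ < ‖y‖ := by rwa [one_mul, mul_one]
  have hidem : IsIdempotentElem (j n e) :=
    (MultiMatrix.isStarProjection_matrixUnit l 0).isIdempotentElem.map (j n)
  exact ⟨n, l, mem_of_isIdempotentElem_of_norm_sub_lt_one hidem hzI hnorm⟩

theorem eq_bot_or_eq_top [∀ n l, NeZero (κ n l)] (hj : IsSeqLimit ψ j)
    {N : ∀ n, ι n → ι (n + 1) → ℕ} (hN : ∀ n, MultiMatrix.HasMultiplicities (ψ n) (N n))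
    (hN_ne : ∀ n l m, N n l m ≠ 0) (I : TwoSidedIdeal L) : I = ⊥ ∨ I = ⊤ := by
  classical
  refine or_iff_not_imp_left.2 fun hI => ?_
  obtain ⟨n, l, hl⟩ := hj.exists_matrixUnit_mem hI
  rw [← hj.map_succ] at hl
  exact MultiMatrix.eq_top_of_forall_block_ne_zero (j (n + 1)).toAlgHom hl fun m =>
    (hN n).map_matrixUnit_ne_zero (hN_ne n l m) 0

end IsSeqLimit

theorem TracialMultiMatrix.IsNearlyProportional.exists_ne_zero {C C' : TracialMultiMatrix}
    {ψ : C.Carrier →⋆ₐ[ℂ] C'.Carrier} {ε : ℝ} (hψ : IsNearlyProportional ψ ε) (hε : ε < 1) :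
    ∃ N : Fin C.numBlocks → Fin C'.numBlocks → ℕ,
      MultiMatrix.HasMultiplicities ψ N ∧ ∀ l m, N l m ≠ 0 := by
  obtain ⟨N, D, hN, hD, hprop⟩ := hψ
  refine ⟨N, hN, fun l m h => ?_⟩
  have hpos : 0 < D * C.weight l := mul_pos hD (C.weight_pos l)
  have hle := hprop l m
  rw [h, Nat.cast_zero, zero_sub, abs_neg, abs_of_pos hpos] at hle
  nlinarith

/-! ### Uniqueness of the trace -/

theorem IsTracialState.comp {A B : Type*} [Ring A] [StarRing A] [Algebra ℂ A] [Ring B] [StarRing B]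
    [Algebra ℂ B] {τ : B →ₗ[ℂ] ℂ} (hτ : IsTracialState τ) (f : A →⋆ₐ[ℂ] B) :
    IsTracialState (τ ∘ₗ f.toAlgHom.toLinearMap) where
  map_one := (congrArg τ (_root_.map_one f)).trans hτ.map_one
  nonneg a := by
    change 0 ≤ τ (f (star a * a))
    rw [map_mul f, map_star]
    exact hτ.nonneg (f a)
  mul_comm a b := by
    change τ (f (a * b)) = τ (f (b * a))
    rw [map_mul f, map_mul f, hτ.mul_comm]

namespace MultiMatrix

variable {ι : Type*} [Fintype ι] {κ : ι → ℕ}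

theorem eq_zero_of_weightedTrace_star_mul_self_eq_zero {w : ι → ℝ} (hw : ∀ l, 0 < w l)
    {x : MultiMatrix κ} (h : weightedTrace w (star x * x) = 0) : x = 0 := by
  have hnonneg (l : ι) : 0 ≤ (w l : ℂ) * ((star x * x) l).trace :=
    mul_nonneg (Complex.zero_le_real.2 (hw l).le)
      (Matrix.posSemidef_conjTranspose_mul_self (x l)).trace_nonneg
  rw [weightedTrace_apply, Finset.sum_eq_zero_iff_of_nonneg fun l _ => hnonneg l] at h
  funext l
  have hl := (mul_eq_zero.1 (h l (Finset.mem_univ l))).resolve_left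
    (Complex.ofReal_ne_zero.2 (hw l).ne')
  exact Matrix.trace_conjTranspose_mul_self_eq_zero_iff.1 hl

theorem exists_eq_weightedTrace [∀ l, NeZero (κ l)] {f : MultiMatrix κ →ₗ[ℂ] ℂ}
    (hf : ∀ x, 0 ≤ f (star x * x)) (hf_comm : ∀ x y, f (x * y) = f (y * x)) :
    ∃ w : ι → ℝ, (∀ l, 0 ≤ w l) ∧ f = weightedTrace w := by
  classical
  have hnonneg (l : ι) : 0 ≤ f (matrixUnit l 0 0) := by
    have h := hf (matrixUnit l 0 0)
    rwa [star_matrixUnit, matrixUnit_mul_matrixUnit] at h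
  refine ⟨fun l => (f (matrixUnit l 0 0)).re, fun l => (Complex.nonneg_iff.1 (hnonneg l)).1,
    tracial_ext hf_comm (weightedTrace_mul_comm _) fun l => ?_⟩
  rw [weightedTrace_matrixUnit]
  exact Complex.eq_re_of_ofReal_le (hnonneg l)

theorem exists_eq_weightedTrace_of_faithful [∀ l, NeZero (κ l)] {f : MultiMatrix κ →ₗ[ℂ] ℂ}
    (hf : ∀ x, 0 ≤ f (star x * x)) (hf_faithful : ∀ x, f (star x * x) = 0 → x = 0)
    (hf_comm : ∀ x y, f (x * y) = f (y * x)) :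
    ∃ w : ι → ℝ, (∀ l, 0 < w l) ∧ f = weightedTrace w := by
  classical
  obtain ⟨w, hw, rfl⟩ := exists_eq_weightedTrace hf hf_comm
  refine ⟨w, fun l => (hw l).lt_of_ne' fun hl => one_ne_zero (α := ℂ) ?_, rfl⟩
  have hunit : (matrixUnit l 0 0 : MultiMatrix κ) = 0 := hf_faithful _ <| by
    rw [star_matrixUnit, matrixUnit_mul_matrixUnit, weightedTrace_matrixUnit, hl,
      Complex.ofReal_zero]
  have h := weightedTrace_matrixUnit (κ := κ) (fun _ => 1) l 0
  rwa [hunit, map_zero, Complex.ofReal_one, eq_comm] at h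

end MultiMatrix

namespace TracialMultiMatrix

variable {A C C' : TracialMultiMatrix}

theorem IsTracePreserving.norm_map {f : A.Carrier →⋆ₐ[ℂ] C.Carrier} (hf : IsTracePreserving f)
    (x : A.Carrier) : ‖f x‖ = ‖x‖ := by
  refine NonUnitalStarAlgHom.norm_map f ((injective_iff_map_eq_zero f).2 fun y hy => ?_) x
  refine MultiMatrix.eq_zero_of_weightedTrace_star_mul_self_eq_zero A.weight_pos ?_
  rw [← trace, ← hf, map_mul, hy, mul_zero, map_zero]

theorem weight_mul_le_of_abs_sub_le {N : Fin C.numBlocks → Fin C'.numBlocks → ℕ} {D ε : ℝ}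
    (hε : 0 ≤ ε) (hε' : ε ≤ 1)
    (hN : ∀ l m, |N l m - D * C.weight l| ≤ ε * (D * C.weight l))
    {v : Fin C'.numBlocks → ℝ} (hv : ∀ m, 0 ≤ v m)
    (hsum : ∑ l, (∑ m, N l m * v m) * C.size l = 1) (l : Fin C.numBlocks) :
    (1 - 2 * ε) * C.weight l ≤ ∑ m, N l m * v m := by
  set T := D * ∑ m, v m with hT
  have hlower (l : Fin C.numBlocks) : (1 - ε) * T * C.weight l ≤ ∑ m, N l m * v m := by
    rw [hT, Finset.mul_sum, Finset.mul_sum, Finset.sum_mul]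
    refine Finset.sum_le_sum fun m _ => ?_
    linarith [mul_le_mul_of_nonneg_right (abs_le.1 (hN l m)).1 (hv m)]
  have hupper (l : Fin C.numBlocks) : ∑ m, N l m * v m ≤ (1 + ε) * T * C.weight l := by
    rw [hT, Finset.mul_sum, Finset.mul_sum, Finset.sum_mul]
    refine Finset.sum_le_sum fun m _ => ?_
    linarith [mul_le_mul_of_nonneg_right (abs_le.1 (hN l m)).2 (hv m)]
  have hmass : 1 ≤ (1 + ε) * T := calc
    1 = ∑ l, (∑ m, N l m * v m) * C.size l := hsum.symm
    _ ≤ ∑ l, (1 + ε) * T * C.weight l * C.size l :=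
        Finset.sum_le_sum fun l _ => by gcongr; exact hupper l
    _ = (1 + ε) * T := by
        simp only [mul_assoc _ (C.weight _), ← Finset.mul_sum, C.sum_weight_mul_size, mul_one]
  have hT_lower : 1 - ε ≤ T := by nlinarith
  have hfactor : 1 - 2 * ε ≤ (1 - ε) * T := by nlinarith [hT_lower]
  exact (mul_le_mul_of_nonneg_right hfactor (C.weight_pos l).le).trans (hlower l)

/- The difference `weightedTrace v - (1 - δ) • C.trace` is positive, so its norm is its value `δ`
at `1`. -/
theorem norm_weightedTrace_sub_trace_le {v : Fin C.numBlocks → ℝ} {δ : ℝ} (hδ : 0 ≤ δ)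
    (hsum : ∑ l, v l * C.size l = 1) (hv : ∀ l, (1 - δ) * C.weight l ≤ v l) (x : C.Carrier) :
    ‖MultiMatrix.weightedTrace v x - C.trace x‖ ≤ 2 * δ * ‖x‖ := by
  let u (l : Fin C.numBlocks) : ℝ := v l - (1 - δ) * C.weight l
  have hsplit (y : C.Carrier) : MultiMatrix.weightedTrace u y =
      MultiMatrix.weightedTrace v y - (1 - δ) * C.trace y := by
    simp only [trace, MultiMatrix.weightedTrace_apply, Finset.mul_sum, ← Finset.sum_sub_distrib, u]
    refine Finset.sum_congr rfl fun l _ => ?_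
    push_cast
    ring
  have hu_one : (MultiMatrix.weightedTrace u (1 : C.Carrier)).re = δ := by
    rw [hsplit, MultiMatrix.weightedTrace_one, hsum, C.isTracialState_trace.map_one]
    simp
  have hu := norm_map_le_re_map_one_mul
    (MultiMatrix.weightedTrace_star_mul_self_nonneg fun l => sub_nonneg.2 (hv l)) x
  rw [hu_one] at hu
  calc ‖MultiMatrix.weightedTrace v x - C.trace x‖
      = ‖MultiMatrix.weightedTrace u x - δ * C.trace x‖ := by rw [hsplit]; ring_nf
    _ ≤ ‖MultiMatrix.weightedTrace u x‖ + δ * ‖C.trace x‖ := by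
        refine (norm_sub_le _ _).trans_eq ?_
        rw [norm_mul, Complex.norm_of_nonneg hδ]
    _ ≤ δ * ‖x‖ + δ * ‖x‖ := by gcongr; exact C.isTracialState_trace.norm_map_le x
    _ = 2 * δ * ‖x‖ := by ring

theorem IsNearlyProportional.norm_map_sub_trace_le {ψ : C.Carrier →⋆ₐ[ℂ] C'.Carrier} {ε : ℝ}
    (hψ : IsNearlyProportional ψ ε) (hε : 0 ≤ ε) (hε' : ε ≤ 1) {f : C'.Carrier →ₗ[ℂ] ℂ}
    (hf : IsTracialState f) (x : C.Carrier) : ‖f (ψ x) - C.trace x‖ ≤ 4 * ε * ‖x‖ := by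
  obtain ⟨N, D, hN, -, hprop⟩ := hψ
  obtain ⟨v, hv, rfl⟩ := MultiMatrix.exists_eq_weightedTrace hf.nonneg hf.mul_comm
  have hsum : ∑ l, (∑ m, N l m * v m) * C.size l = 1 := by
    have hone := hf.map_one
    rwa [← map_one ψ, MultiMatrix.weightedTrace_map hN, MultiMatrix.weightedTrace_one,
      Complex.ofReal_eq_one] at hone
  rw [MultiMatrix.weightedTrace_map hN]
  exact (norm_weightedTrace_sub_trace_le (δ := 2 * ε) (by positivity) hsum
    (weight_mul_le_of_abs_sub_le hε hε' hprop hv hsum) x).trans_eq (by ring)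

end TracialMultiMatrix

section TracialLimit

open TracialMultiMatrix

variable {C : ℕ → TracialMultiMatrix}
  {ψ : ∀ n, (C n).Carrier →⋆ₐ[ℂ] (C (n + 1)).Carrier}
  {L : Type*} [CStarAlgebra L] {j : ∀ n, (C n).Carrier →⋆ₐ[ℂ] L} {ε : ℕ → ℝ}

theorem IsSeqLimit.tracialState_apply_eq_trace (hj : IsSeqLimit ψ j)
    (hψ : ∀ n, IsTracePreserving (ψ n)) (hψ_prop : ∀ n, IsNearlyProportional (ψ n) (ε n))
    (hε : ∀ n, 0 ≤ ε n) (hε' : ∀ n, ε n ≤ 1) (hε_lim : Filter.Tendsto ε Filter.atTop (nhds 0))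
    {τ : L →ₗ[ℂ] ℂ} (hτ : IsTracialState τ) (n : ℕ) (x : (C n).Carrier) :
    τ (j n x) = (C n).trace x := by
  have hbound (m : ℕ) (hm : n ≤ m) : ‖τ (j n x) - (C n).trace x‖ ≤ 4 * ε m * ‖x‖ := by
    have h := (hψ_prop m).norm_map_sub_trace_le (hε m) (hε' m) (hτ.comp (j (m + 1)))
      (transition ψ hm x)
    rwa [show (τ ∘ₗ (j (m + 1)).toAlgHom.toLinearMap) (ψ m (transition ψ hm x)) = τ (j n x) from
        congrArg τ ((hj.map_succ m _).trans (hj.map_transition hm x)),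
      apply_transition_eq (f := fun n => (C n).trace) hψ,
      apply_transition_eq (f := fun n => (‖·‖)) fun n => (hψ n).norm_map] at h
  have hlim : Filter.Tendsto (fun m => 4 * ε m * ‖x‖) Filter.atTop (nhds 0) := by
    simpa using (hε_lim.const_mul 4).mul_const ‖x‖
  have hzero := ge_of_tendsto hlim (Filter.eventually_atTop.2 ⟨n, hbound⟩)
  exact sub_eq_zero.1 (norm_le_zero_iff.1 hzero)

theorem IsSeqLimit.existsUnique_isTracialState (hj : IsSeqLimit ψ j)
    (hψ : ∀ n, IsTracePreserving (ψ n)) (hψ_prop : ∀ n, IsNearlyProportional (ψ n) (ε n))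
    (hε : ∀ n, 0 ≤ ε n) (hε' : ∀ n, ε n ≤ 1) (hε_lim : Filter.Tendsto ε Filter.atTop (nhds 0)) :
    ∃! τ : L →ₗ[ℂ] ℂ, IsTracialState τ := by
  refine existsUnique_of_exists_of_unique
    (hj.exists_isTracialState fun n => (C n).isTracialState_trace) fun τ σ hτ hσ => ?_
  refine DFunLike.coe_injective (hj.denseRange.equalizer hτ.continuous hσ.continuous ?_)
  funext ⟨n, x⟩
  exact (hj.tracialState_apply_eq_trace hψ hψ_prop hε hε' hε_lim hτ n x).trans
    (hj.tracialState_apply_eq_trace hψ hψ_prop hε hε' hε_lim hσ n x).symm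

end TracialLimit

/-! ### The embedding -/

section Embedding

open scoped UnitalCStarAlg

theorem IsSeqLimit.isAF {B : UnitalCStarAlg} {C : ℕ → Type*} [∀ n, CStarAlgebra (C n)]
    [∀ n, FiniteDimensional ℂ (C n)] {ψ : ∀ n, C n →⋆ₐ[ℂ] C (n + 1)}
    {j : ∀ n, C n →⋆ₐ[ℂ] B.carrier} (hj : IsSeqLimit ψ j) : B.IsAF :=
  ⟨fun n => (j n).range, IsSeqLimit.monotone_range hj.map_succ,
    fun n => LinearMap.finiteDimensional_range (j n).toAlgHom.toLinearMap, hj.dense⟩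

theorem exists_isSeqLimit_tracialMultiMatrix {B : UnitalCStarAlg} (hB : B.IsAF)
    {τ : B.carrier →ₗ[ℂ] ℂ} (hτ : IsTracialState τ)
    (hτ_faithful : ∀ a, τ (star a * a) = 0 → a = 0) :
    ∃ (A : ℕ → TracialMultiMatrix) (i : ∀ n, (A n).Carrier →⋆ₐ[ℂ] (A (n + 1)).Carrier)
      (j : ∀ n, (A n).Carrier →⋆ₐ[ℂ] B.carrier),
      (∀ n, TracialMultiMatrix.IsTracePreserving (i n)) ∧ IsSeqLimit i j := by
  obtain ⟨k, κ, i, j, hκ, hj⟩ := exists_isSeqLimit_of_isAF hB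
  have hj_inj (n : ℕ) : Function.Injective (j n) :=
    (AddMonoidHomClass.isometry_of_norm (j n) (hj.norm_map n)).injective
  have hτj (n : ℕ) := hτ.comp (j n)
  choose w hw hτw using fun n => MultiMatrix.exists_eq_weightedTrace_of_faithful (hτj n).nonneg
    (fun x hx => (map_eq_zero_iff (j n) (hj_inj n)).1 <| hτ_faithful (j n x) <| by
      rw [← map_star, ← map_mul]; exact hx)
    (hτj n).mul_comm
  let A (n : ℕ) : TracialMultiMatrix :=
    { numBlocks := k n
      size := κ n
      weight := w n
      weight_pos := hw n
      sum_weight_mul_size := by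
        have h := (hτj n).map_one
        rwa [hτw, MultiMatrix.weightedTrace_one, Complex.ofReal_eq_one] at h }
  have hA (n : ℕ) (x : (A n).Carrier) : (A n).trace x = τ (j n x) :=
    (LinearMap.congr_fun (hτw n) x).symm
  refine ⟨A, i, j, fun n x => ?_, hj⟩
  rw [hA, hA, hj.map_succ]

theorem exists_embedding_of_faithful_tracialState {B : UnitalCStarAlg} (hB : B.IsAF)
    {τ : B.carrier →ₗ[ℂ] ℂ} (hτ : IsTracialState τ)
    (hτ_faithful : ∀ a, τ (star a * a) = 0 → a = 0) :
    ∃ (L : UnitalCStarAlg) (Θ : B.carrier →⋆ₐ[ℂ] L.carrier), Function.Injective Θ ∧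
      L.IsAF ∧ L.IsSimple ∧ ∃! τ : L.carrier →ₗ[ℂ] ℂ, L.IsTracialState τ := by
  obtain ⟨A, i, j, hi, hj⟩ := exists_isSeqLimit_tracialMultiMatrix hB hτ hτ_faithful
  have hε (n : ℕ) : (0 : ℝ) < 1 / ((n + 1 : ℕ) + 1) := Nat.one_div_pos_of_nat
  have hε' (n : ℕ) : (1 : ℝ) / ((n + 1 : ℕ) + 1) < 1 :=
    (div_lt_one (by positivity)).2 (by push_cast; linarith [(n.cast_nonneg : (0 : ℝ) ≤ n)])
  obtain ⟨C, φ, ψ, hφ, hψ, hψ_prop, hcomm⟩ := TracialMultiMatrix.exists_tower hi hε hε'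
  have hL := CompatSeq.isSeqLimit_toCompletion fun n => (hψ n).norm_map
  obtain ⟨Θ, hΘ⟩ := hj.exists_injective_starAlgHom
    (θ := fun n => (CompatSeq.toCompletion ψ n).comp (φ n))
    (fun n x => (hL.norm_map n (φ n x)).trans ((hφ n).norm_map x))
    (fun n x => (congrArg _ (hcomm n x)).trans (hL.map_succ n (φ n x)))
  choose N hN hN_ne using fun n => (hψ_prop n).exists_ne_zero (hε' n)
  have hunique := hL.existsUnique_isTracialState hψ hψ_prop (fun n => (hε n).le)
    (fun n => (hε' n).le)
    ((Filter.tendsto_add_atTop_iff_nat 1).2 tendsto_one_div_add_atTop_nhds_zero_nat)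
  let L : UnitalCStarAlg := ⟨UniformSpace.Completion (CompatSeq ψ)⟩
  exact ⟨L, Θ, hΘ, IsSeqLimit.isAF (B := L) hL, fun I _ => hL.eq_bot_or_eq_top hN hN_ne I,
    (existsUnique_congr fun _ => isTracialState_iff (B := L)).1 hunique⟩

end Embedding

namespace UnitalCStarAlg

theorem isAF_of_finiteDimensional (B : UnitalCStarAlg) [FiniteDimensional ℂ B.carrier] : B.IsAF :=
  ⟨fun _ => ⊤, monotone_const,
    fun _ => inferInstanceAs (FiniteDimensional ℂ (⊤ : Submodule ℂ B.carrier)),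
    by simp [Set.iUnion_const]⟩

/-- The one-dimensional C*-algebra. -/
noncomputable abbrev complex : UnitalCStarAlg := ⟨ℂ⟩

theorem isSimple_complex : complex.IsSimple := fun I _ => eq_bot_or_eq_top (α := TwoSidedIdeal ℂ) I

theorem existsUnique_isTracialState_complex :
    ∃! τ : complex.carrier →ₗ[ℂ] ℂ, complex.IsTracialState τ :=
  ⟨LinearMap.id, ⟨rfl, star_mul_self_nonneg (R := ℂ), mul_comm (G := ℂ)⟩,
    fun _ hτ => LinearMap.ext_ring (R := ℂ) (M₃ := ℂ) hτ.1⟩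

end UnitalCStarAlg

theorem stmt_1_general {A : Type*} [NonUnitalNonAssocSemiring A] [DistribMulAction ℂ A] [Star A]
    (h : ∃ (B : UnitalCStarAlg) (φ : A →⋆ₙₐ[ℂ] B.carrier),
      Function.Injective φ ∧ B.IsAF ∧ B.IsSimple) :
    ∃ (B : UnitalCStarAlg) (φ : A →⋆ₙₐ[ℂ] B.carrier),
      Function.Injective φ ∧ B.IsAF ∧ B.IsSimple ∧
        ∃! τ : B.carrier →ₗ[ℂ] ℂ, B.IsTracialState τ := by
  obtain ⟨B, φ, hφ, hB, hB_simple⟩ := h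
  rcases subsingleton_or_nontrivial B.carrier with hB_zero | hB_nontrivial
  · have : Subsingleton A := hφ.subsingleton
    exact ⟨.complex, (0 : B.carrier →⋆ₙₐ[ℂ] ℂ).comp φ, Function.injective_of_subsingleton _,
      UnitalCStarAlg.isAF_of_finiteDimensional _, UnitalCStarAlg.isSimple_complex,
      UnitalCStarAlg.existsUnique_isTracialState_complex⟩
  · obtain ⟨τ, hτ⟩ := exists_isTracialState_of_isAF hB
    obtain ⟨L, Θ, hΘ, hL⟩ := exists_embedding_of_faithful_tracialState hB hτ fun _ =>
      eq_zero_of_isTracialState_of_isSimple hB_simple hτ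
    exact ⟨L, (Θ : B.carrier →⋆ₙₐ[ℂ] L.carrier).comp φ, hΘ.comp hφ, hL⟩

/-- If a unital separable C*-algebra embeds into a unital simple AF-algebra, then it
embeds into a unital simple AF-algebra having exactly one tracial state. -/
theorem stmt_1 {A : Type*} [NormedRing A] [StarRing A] [CStarRing A] [NormedAlgebra ℂ A]
    [StarModule ℂ A] [CompleteSpace A] [TopologicalSpace.SeparableSpace A]
    (h : ∃ (B : UnitalCStarAlg) (φ : A →⋆ₙₐ[ℂ] B.carrier),
      Function.Injective φ ∧ B.IsAF ∧ B.IsSimple) :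
    ∃ (B : UnitalCStarAlg) (φ : A →⋆ₙₐ[ℂ] B.carrier),
      Function.Injective φ ∧ B.IsAF ∧ B.IsSimple ∧
        ∃! τ : B.carrier →ₗ[ℂ] ℂ, B.IsTracialState τ :=
  stmt_1_general h
end
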